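/- arXiv:2408.11620 — 4 statements merged into one kernel-verified Lean document; each statement's English description precedes it below -/
import Mathlib

section
/- Let p ∈ Δ*_m, q ∈ Δ*_n, c ∈ ℝ^{m×n}, and let α > 0, β > 0. Let F* be the minimum over Γ(*,q) of F^reg(π) = ⟨c,π⟩ + (1/α) KL(π𝟙|p) + (1/β) KL(π|π^ref), and let π* be its (unique) minimizer. Then: (i) F* = max over (u,v) ∈ ℝ^m × ℝ^n of (1/α)⟨𝟙 − e^{−αu}, p⟩ + ⟨v, q⟩ − (1/β)⟨e^{β(u𝟙ᵀ + 𝟙vᵀ − c)}, π^ref⟩ + 1/β (exponentials entrywise); (ii) this dual problem admits a unique maximizer (u*, v*); (iii) the primal-dual relations π*𝟙 = e^{−αu*} ⊙ p and π* = e^{β(u*𝟙ᵀ + 𝟙(v*)ᵀ − c)} ⊙ π^ref hold, where ⊙ is entrywise multiplication. -/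
open Finset Filter Topology ENNReal

noncomputable section

/-- Frobenius inner product `⟨c, π⟩ = ∑_{ij} c_ij π_ij`. -/
def frob {m n : ℕ} (c π : Matrix (Fin m) (Fin n) ℝ) : ℝ := ∑ i, ∑ j, c i j * π i j

/-- Row sums `π𝟙`. -/
def rowSum {m n : ℕ} (π : Matrix (Fin m) (Fin n) ℝ) : Fin m → ℝ := fun i => ∑ j, π i j

/-- Column sums `πᵀ𝟙`. -/
def colSum {m n : ℕ} (π : Matrix (Fin m) (Fin n) ℝ) : Fin n → ℝ := fun j => ∑ i, π i j

/-- Kullback–Leibler divergence between nonnegative vectors. -/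
def KLvec {k : ℕ} (a b : Fin k → ℝ) : ℝ := ∑ i, (a i * Real.log (a i / b i) - a i + b i)

/-- Kullback–Leibler divergence between nonnegative matrices. -/
def KLmat {m n : ℕ} (a b : Matrix (Fin m) (Fin n) ℝ) : ℝ :=
  ∑ i, ∑ j, (a i j * Real.log (a i j / b i j) - a i j + b i j)

/-- The tipless simplex `Δ*_k`: strictly positive entries summing to 1. -/
def simplexPos (k : ℕ) : Set (Fin k → ℝ) := {p | (∀ i, 0 < p i) ∧ ∑ i, p i = 1}

/-- The simplex `Δ_k`: nonnegative entries summing to 1. -/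
def simplexNN (k : ℕ) : Set (Fin k → ℝ) := {p | (∀ i, 0 ≤ p i) ∧ ∑ i, p i = 1}

/-- Transport plans `Γ(p, q)`. -/
def Gamma {m n : ℕ} (p : Fin m → ℝ) (q : Fin n → ℝ) : Set (Matrix (Fin m) (Fin n) ℝ) :=
  {π | (∀ i j, 0 ≤ π i j) ∧ rowSum π = p ∧ colSum π = q}

/-- Half-relaxed plans `Γ(*, q)`. -/
def GammaStar {m n : ℕ} (q : Fin n → ℝ) : Set (Matrix (Fin m) (Fin n) ℝ) :=
  {π | (∀ i j, 0 ≤ π i j) ∧ colSum π = q}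

/-- Reference plan `π^ref = (mn)⁻¹ 𝟙𝟙ᵀ`. -/
def piRef (m n : ℕ) : Matrix (Fin m) (Fin n) ℝ := fun _ _ => 1 / (m * n)

/-- Optimal transport value `OT(p,q)`. -/
def OTval {m n : ℕ} (c : Matrix (Fin m) (Fin n) ℝ) (p : Fin m → ℝ) (q : Fin n → ℝ) : ℝ :=
  ⨅ π : Gamma p q, frob c π.1

/-- Entropic OT objective `⟨c,π⟩ + β⁻¹ KL(π|π^ref)`. -/
def eotObj {m n : ℕ} (c : Matrix (Fin m) (Fin n) ℝ) (β : ℝ) (π : Matrix (Fin m) (Fin n) ℝ) : ℝ :=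
  frob c π + β⁻¹ * KLmat π (piRef m n)

/-- Entropic OT value `EOT_β(p,q)`. -/
def eotVal {m n : ℕ} (c : Matrix (Fin m) (Fin n) ℝ) (β : ℝ) (p : Fin m → ℝ) (q : Fin n → ℝ) : ℝ :=
  ⨅ π : Gamma p q, eotObj c β π.1

/-- Gibbs kernel `K = e^{-βc}` (entrywise). -/
def gibbs {m n : ℕ} (c : Matrix (Fin m) (Fin n) ℝ) (β : ℝ) : Matrix (Fin m) (Fin n) ℝ :=
  fun i j => Real.exp (-(β * c i j))

/-- Annealed Sinkhorn scaling vectors `(a_t, b_t)`: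
`b_0 = 𝟙`, `a_{t+1} = p ⊘ (K_t b_t)`, `b_{t+1} = q ⊘ (K_{t+1}ᵀ a_{t+1})`, `K_t = e^{-β_t c}`. -/
def sinkAB {m n : ℕ} (p : Fin m → ℝ) (q : Fin n → ℝ) (c : Matrix (Fin m) (Fin n) ℝ)
    (β : ℕ → ℝ) : ℕ → (Fin m → ℝ) × (Fin n → ℝ)
  | 0 => (fun _ => 1, fun _ => 1)
  | t + 1 =>
    let prev := sinkAB p q c β t
    let a : Fin m → ℝ := fun i => p i / ∑ j, gibbs c (β t) i j * prev.2 j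
    (a, fun j => q j / ∑ i, gibbs c (β (t + 1)) i j * a i)

/-- Annealed Sinkhorn primal iterate `π_t = diag(a_t) K_t diag(b_t)`. -/
def sinkPlan {m n : ℕ} (p : Fin m → ℝ) (q : Fin n → ℝ) (c : Matrix (Fin m) (Fin n) ℝ)
    (β : ℕ → ℝ) (t : ℕ) : Matrix (Fin m) (Fin n) ℝ :=
  fun i j => (sinkAB p q c β t).1 i * gibbs c (β t) i j * (sinkAB p q c β t).2 j

/-- `ℓ¹` norm of a vector. -/
def l1vec {k : ℕ} (a : Fin k → ℝ) : ℝ := ∑ i, |a i|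

/-- Oscillation semi-norm `‖c‖_osc = max c - min c`. -/
def cOsc {m n : ℕ} (c : Matrix (Fin m) (Fin n) ℝ) : ℝ :=
  (⨆ i, ⨆ j, c i j) - ⨅ i, ⨅ j, c i j

/-- `‖log p‖_∞`. -/
def logSup {k : ℕ} (p : Fin k → ℝ) : ℝ := ⨆ i, |Real.log (p i)|

/-- The rounding ("projection") procedure of Altschuler et al. (Algorithm 3). -/
def roundPlan {m n : ℕ} (p : Fin m → ℝ) (q : Fin n → ℝ) (π : Matrix (Fin m) (Fin n) ℝ) :
    Matrix (Fin m) (Fin n) ℝ :=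
  let π' : Matrix (Fin m) (Fin n) ℝ := fun i j => min 1 (p i / rowSum π i) * π i j
  let π'' : Matrix (Fin m) (Fin n) ℝ := fun i j => π' i j * min 1 (q j / colSum π' j)
  fun i j => π'' i j +
    (p i - rowSum π'' i) * (q j - colSum π'' j) / l1vec (fun i' => p i' - rowSum π'' i')

/-- Relaxed entropic objective `F^reg(π) = ⟨c,π⟩ + α⁻¹ KL(π𝟙|p) + β⁻¹ KL(π|π^ref)`. -/
def Freg {m n : ℕ} (c : Matrix (Fin m) (Fin n) ℝ) (p : Fin m → ℝ) (α β : ℝ)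
    (π : Matrix (Fin m) (Fin n) ℝ) : ℝ :=
  frob c π + α⁻¹ * KLvec (rowSum π) p + β⁻¹ * KLmat π (piRef m n)

/-- Dual functional for the relaxed entropic problem. -/
def dualFun {m n : ℕ} (p : Fin m → ℝ) (q : Fin n → ℝ) (c : Matrix (Fin m) (Fin n) ℝ)
    (α β : ℝ) (u : Fin m → ℝ) (v : Fin n → ℝ) : ℝ :=
  α⁻¹ * (∑ i, (1 - Real.exp (-(α * u i))) * p i) + ∑ j, v j * q j
    - β⁻¹ * (∑ i, ∑ j, Real.exp (β * (u i + v j - c i j)) * piRef m n i j) + β⁻¹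

/-- Dual functional of entropic OT. -/
def eotDual {m n : ℕ} (p : Fin m → ℝ) (q : Fin n → ℝ) (c : Matrix (Fin m) (Fin n) ℝ)
    (β : ℝ) (u : Fin m → ℝ) (v : Fin n → ℝ) : ℝ :=
  ∑ i, p i * u i + ∑ j, q j * v j
    + β⁻¹ * (1 - ∑ i, ∑ j, piRef m n i j * Real.exp (β * (u i + v j - c i j)))

/-- The set `C_β` of plans of the form `diag(a) e^{-βc} diag(b)` with `a, b ≥ 0`. -/
def scalingSet {m n : ℕ} (c : Matrix (Fin m) (Fin n) ℝ) (β : ℝ) :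
    Set (Matrix (Fin m) (Fin n) ℝ) :=
  {π | ∃ a : Fin m → ℝ, ∃ b : Fin n → ℝ, (∀ i, 0 ≤ a i) ∧ (∀ j, 0 ≤ b j) ∧
    π = fun i j => a i * Real.exp (-(β * c i j)) * b j}


/-- Scalar KL term. -/
def klT (b x : ℝ) : ℝ := x * Real.log (x / b) - x + b

/-- Fenchel gap. -/
def fgap (a b s : ℝ) : ℝ := a * Real.log (a / b) - a - a * s + b * Real.exp s

lemma fgap_pos {a b s : ℝ} (ha : 0 < a) (hb : 0 < b) (hne : a ≠ b * Real.exp s) :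
    0 < fgap a b s := by
  set x := s - Real.log (a / b) with hx
  have hab : 0 < a / b := div_pos ha hb
  have hs : s = x + Real.log (a / b) := by rw [hx]; ring
  have hE : b * Real.exp s = a * Real.exp x := by
    rw [hs, Real.exp_add, Real.exp_log hab]; field_simp
  have hx0 : x ≠ 0 := by
    intro h0
    apply hne
    rw [hE, h0]; simp
  have h := Real.add_one_lt_exp hx0
  have : fgap a b s = a * (Real.exp x - (x + 1)) := by
    unfold fgap
    rw [hE, hs]; ring
  rw [this]
  exact mul_pos ha (by linarith)

lemma fgap_zero {a b s : ℝ} (hb : 0 < b) (h : a = b * Real.exp s) : fgap a b s = 0 := by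
  unfold fgap
  have : a / b = Real.exp s := by rw [h]; field_simp
  rw [this, Real.log_exp, ← h]; ring

lemma fgap_nonneg {a b s : ℝ} (ha : 0 < a) (hb : 0 < b) : 0 ≤ fgap a b s := by
  by_cases h : a = b * Real.exp s
  · exact (fgap_zero hb h).ge
  · exact (fgap_pos ha hb h).le

lemma klT_eq {b x : ℝ} (hb : 0 < b) : klT b x = x * Real.log x - x * Real.log b - x + b := by
  unfold klT
  by_cases hx : x = 0
  · simp [hx]
  · rw [Real.log_div hx hb.ne']; ring

lemma klT_conv {b x y t : ℝ} (hb : 0 < b) (hx : 0 ≤ x) (hy : 0 ≤ y) (ht : 0 ≤ t) (ht1 : t ≤ 1) :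
    klT b ((1 - t) * x + t * y) ≤ (1 - t) * klT b x + t * klT b y := by
  rw [klT_eq hb, klT_eq hb, klT_eq hb]
  have h := Real.convexOn_mul_log.2 (Set.mem_Ici.2 hx) (Set.mem_Ici.2 hy)
    (sub_nonneg.2 ht1) ht (by ring)
  simp only [smul_eq_mul] at h
  nlinarith [h]

lemma klT_zero {b y t : ℝ} (hb : 0 < b) (hy : 0 < y) (ht : 0 < t) :
    klT b ((1 - t) * 0 + t * y) = (1 - t) * klT b 0 + t * klT b y + t * y * Real.log t := by
  rw [klT_eq hb, klT_eq hb, klT_eq hb]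
  simp only [mul_zero, zero_add]
  rw [Real.log_mul ht.ne' hy.ne']
  ring

lemma klT_hasDerivAt {b x : ℝ} (hb : 0 < b) (hx : 0 < x) :
    HasDerivAt (klT b) (Real.log (x / b)) x := by
  have h : klT b = fun x => x * Real.log x - x * Real.log b - x + b := by
    funext y; exact klT_eq hb
  rw [h, Real.log_div hx.ne' hb.ne']
  have h1 := (((Real.hasDerivAt_mul_log hx.ne').sub
    ((hasDerivAt_id x).mul_const (Real.log b))).sub (hasDerivAt_id x)).add_const b
  refine HasDerivAt.congr_deriv h1 ?_
  ring

lemma Freg_eq {m n : ℕ} (c : Matrix (Fin m) (Fin n) ℝ) (p : Fin m → ℝ) (α β : ℝ)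
    (π : Matrix (Fin m) (Fin n) ℝ) :
    Freg c p α β π = (∑ i, ∑ j, c i j * π i j) + α⁻¹ * (∑ i, klT (p i) (∑ j, π i j))
      + β⁻¹ * ∑ i, ∑ j, klT (1 / (m * n)) (π i j) := rfl

lemma Freg_gap {m n : ℕ} (p : Fin m → ℝ) (q : Fin n → ℝ) (c : Matrix (Fin m) (Fin n) ℝ)
    (hm : 0 < m) (hn : 0 < n)
    (α β : ℝ) (hα : 0 < α) (hβ : 0 < β) (π : Matrix (Fin m) (Fin n) ℝ)
    (hc : ∀ j, ∑ i, π i j = q j) (u : Fin m → ℝ) (v : Fin n → ℝ) :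
    Freg c p α β π = dualFun p q c α β u v
      + α⁻¹ * (∑ i, fgap (∑ j, π i j) (p i) (-(α * u i)))
      + β⁻¹ * ∑ i, ∑ j, fgap (π i j) (1 / (m * n)) (β * (u i + v j - c i j)) := by
  have hm' : (m : ℝ) ≠ 0 := by positivity
  have hn' : (n : ℝ) ≠ 0 := by positivity
  have e1 : ∀ i, klT (p i) (∑ j, π i j) = fgap (∑ j, π i j) (p i) (-(α * u i))
      - α * (∑ j, u i * π i j) + (1 - Real.exp (-(α * u i))) * p i := by
    intro i
    rw [← Finset.mul_sum]
    unfold klT fgap; ring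
  have e2 : ∀ i j, klT (1 / (m * n)) (π i j)
      = fgap (π i j) (1 / (m * n)) (β * (u i + v j - c i j))
      + β * (u i * π i j) + β * (v j * π i j) - β * (c i j * π i j)
      - Real.exp (β * (u i + v j - c i j)) * piRef m n i j + 1 / (m * n) := by
    intro i j
    unfold klT fgap piRef; ring
  have e3 : ∑ j, v j * q j = ∑ i, ∑ j, v j * π i j := by
    rw [Finset.sum_comm]
    refine Finset.sum_congr rfl fun j _ => ?_
    rw [← hc j, Finset.mul_sum]
  have e4 : ∑ i : Fin m, ∑ j : Fin n, (1 / (m * n) : ℝ) = 1 := by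
    simp; field_simp
  rw [Freg_eq, dualFun, e3]
  simp only [e1, e2, Finset.sum_add_distrib, Finset.sum_sub_distrib, ← Finset.mul_sum, e4]
  field_simp
  ring

lemma star_pos {m n : ℕ} (p : Fin m → ℝ) (q : Fin n → ℝ) (c : Matrix (Fin m) (Fin n) ℝ)
    (hm : 0 < m) (hn : 0 < n) (hp : ∀ i, 0 < p i) (hp1 : ∑ i, p i = 1) (hq : ∀ j, 0 < q j)
    (α β : ℝ) (hα : 0 < α) (hβ : 0 < β) (π : Matrix (Fin m) (Fin n) ℝ)
    (h0 : ∀ i j, 0 ≤ π i j) (hc : ∀ j, ∑ i, π i j = q j)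
    (hopt : ∀ π' ∈ GammaStar (m := m) q, Freg c p α β π ≤ Freg c p α β π')
    (i0 : Fin m) (j0 : Fin n) : 0 < π i0 j0 := by
  by_contra hneg
  have hz : π i0 j0 = 0 := le_antisymm (not_lt.1 hneg) (h0 i0 j0)
  have hm' : (0 : ℝ) < m := by positivity
  have hn' : (0 : ℝ) < n := by positivity
  have hb : (0 : ℝ) < 1 / (m * n) := by positivity
  set σ : Matrix (Fin m) (Fin n) ℝ := fun i j => p i * q j with hσ
  have hσp : ∀ i j, 0 < σ i j := fun i j => mul_pos (hp i) (hq j)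
  have key : ∀ t : ℝ, 0 < t → t < 1 → Freg c p α β π - Freg c p α β σ
      ≤ β⁻¹ * σ i0 j0 * Real.log t := by
    intro t ht ht1
    have hl : Real.log t < 0 := Real.log_neg ht ht1
    set τ : Matrix (Fin m) (Fin n) ℝ := fun i j => (1 - t) * π i j + t * σ i j with hτ
    have hmem : τ ∈ GammaStar (m := m) q := by
      refine ⟨fun i j => ?_, ?_⟩
      · have := h0 i j
        have := hσp i j
        have : 0 ≤ 1 - t := by linarith
        simp only [hτ]; positivity
      · funext j
        simp only [colSum, hτ, hσ, Finset.sum_add_distrib, ← Finset.mul_sum, ← Finset.sum_mul,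
          hc, hp1]
        ring
    have hle := hopt τ hmem
    have a1 : ∑ i, ∑ j, c i j * τ i j
        = (1 - t) * (∑ i, ∑ j, c i j * π i j) + t * ∑ i, ∑ j, c i j * σ i j := by
      simp only [Finset.mul_sum, ← Finset.sum_add_distrib, hτ]
      refine Finset.sum_congr rfl fun i _ => Finset.sum_congr rfl fun j _ => by ring
    have a2 : ∑ i, klT (p i) (∑ j, τ i j) ≤ (1 - t) * (∑ i, klT (p i) (∑ j, π i j))
        + t * ∑ i, klT (p i) (∑ j, σ i j) := by
      rw [Finset.mul_sum, Finset.mul_sum, ← Finset.sum_add_distrib]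
      refine Finset.sum_le_sum fun i _ => ?_
      have : ∑ j, τ i j = (1 - t) * (∑ j, π i j) + t * ∑ j, σ i j := by
        simp only [hτ, Finset.sum_add_distrib, Finset.mul_sum]
      rw [this]
      exact klT_conv (hp i) (Finset.sum_nonneg fun j _ => h0 i j)
        (Finset.sum_nonneg fun j _ => (hσp i j).le) ht.le ht1.le
    have a3 : ∑ i, ∑ j, klT (1 / (m * n)) (τ i j)
        ≤ (1 - t) * (∑ i, ∑ j, klT (1 / (m * n)) (π i j))
        + t * (∑ i, ∑ j, klT (1 / (m * n)) (σ i j)) + t * σ i0 j0 * Real.log t := by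
      have hs : t * σ i0 j0 * Real.log t = ∑ i, ∑ j,
          if i = i0 then (if j = j0 then t * σ i0 j0 * Real.log t else 0) else 0 := by
        simp
      rw [hs]
      simp only [Finset.mul_sum, ← Finset.sum_add_distrib]
      refine Finset.sum_le_sum fun i _ => Finset.sum_le_sum fun j _ => ?_
      by_cases hij : i = i0 ∧ j = j0
      · obtain ⟨rfl, rfl⟩ := hij
        simp only [if_true, hτ]
        rw [hz]
        exact (klT_zero hb (hσp i j) ht).le
      · have : (if i = i0 then (if j = j0 then t * σ i0 j0 * Real.log t else 0) else 0) = 0 := by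
          grind
        rw [this, add_zero]
        exact klT_conv hb (h0 i j) (hσp i j).le ht.le ht1.le
    have b2 := mul_le_mul_of_nonneg_left a2 (inv_pos.2 hα).le
    have b3 := mul_le_mul_of_nonneg_left a3 (inv_pos.2 hβ).le
    have e1 := Freg_eq c p α β π
    have e2 := Freg_eq c p α β σ
    have e3 := Freg_eq c p α β τ
    have : t * (Freg c p α β π - Freg c p α β σ) ≤ t * (β⁻¹ * σ i0 j0 * Real.log t) := by
      have h5 : Freg c p α β τ ≤ (1 - t) * Freg c p α β π + t * Freg c p α β σ
          + t * (β⁻¹ * σ i0 j0 * Real.log t) := by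
        rw [e1, e2, e3, a1]
        linarith
      linarith
    exact le_of_mul_le_mul_left this ht
  have hδ : 0 < β⁻¹ * σ i0 j0 := mul_pos (inv_pos.2 hβ) (hσp i0 j0)
  set δ := β⁻¹ * σ i0 j0
  set K := Freg c p α β π - Freg c p α β σ
  have hk := key (Real.exp (-(|K| / δ + 1))) (Real.exp_pos _) (by
    rw [Real.exp_lt_one_iff]
    have : 0 ≤ |K| / δ := by positivity
    linarith)
  rw [Real.log_exp] at hk
  have : δ * -(|K| / δ + 1) = -|K| - δ := by field_simp; ring
  rw [this] at hk
  linarith [neg_abs_le K]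

lemma star_foc {m n : ℕ} (p : Fin m → ℝ) (q : Fin n → ℝ) (c : Matrix (Fin m) (Fin n) ℝ)
    (hm : 0 < m) (hn : 0 < n) (hp : ∀ i, 0 < p i)
    (α β : ℝ) (π : Matrix (Fin m) (Fin n) ℝ)
    (h0 : ∀ i j, 0 < π i j) (hc : ∀ j, ∑ i, π i j = q j)
    (hopt : ∀ π' ∈ GammaStar (m := m) q, Freg c p α β π ≤ Freg c p α β π')
    (D : Matrix (Fin m) (Fin n) ℝ) (hD : ∀ j, ∑ i, D i j = 0) :
    ∑ i, ∑ j, D i j * (c i j + α⁻¹ * Real.log ((∑ j, π i j) / p i)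
      + β⁻¹ * Real.log (π i j / (1 / (m * n)))) = 0 := by
  have hm' : (0 : ℝ) < m := by positivity
  have hn' : (0 : ℝ) < n := by positivity
  have hb : (0 : ℝ) < 1 / (m * n) := by positivity
  have : Nonempty (Fin n) := ⟨⟨0, hn⟩⟩
  have hr : ∀ i, 0 < ∑ j, π i j := fun i =>
    Finset.sum_pos (fun j _ => h0 i j) Finset.univ_nonempty
  have hent : ∀ i j, HasDerivAt (fun t : ℝ => π i j + t * D i j) (D i j) 0 := by
    intro i j
    simpa using ((hasDerivAt_id (0 : ℝ)).mul_const (D i j)).const_add (π i j)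
  have hrow : ∀ i, HasDerivAt (fun t : ℝ => ∑ j, (π i j + t * D i j)) (∑ j, D i j) 0 :=
    fun i => HasDerivAt.fun_sum fun j _ => hent i j
  have hder : HasDerivAt (fun t : ℝ => Freg c p α β (fun i j => π i j + t * D i j))
      ((∑ i, ∑ j, c i j * D i j)
        + α⁻¹ * (∑ i, Real.log ((∑ j, π i j) / p i) * ∑ j, D i j)
        + β⁻¹ * ∑ i, ∑ j, Real.log (π i j / (1 / (m * n))) * D i j) 0 := by
    change HasDerivAt (fun t : ℝ => (∑ i, ∑ j, c i j * (π i j + t * D i j))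
      + α⁻¹ * (∑ i, klT (p i) (∑ j, (π i j + t * D i j)))
      + β⁻¹ * ∑ i, ∑ j, klT (1 / (m * n)) (π i j + t * D i j)) _ 0
    refine HasDerivAt.add (HasDerivAt.add ?_ (HasDerivAt.const_mul _ ?_))
      (HasDerivAt.const_mul _ ?_)
    · exact HasDerivAt.fun_sum fun i _ => HasDerivAt.fun_sum fun j _ => (hent i j).const_mul _
    · refine HasDerivAt.fun_sum fun i _ => ?_
      refine HasDerivAt.comp (0 : ℝ) (h₂ := klT (p i)) ?_ (hrow i)
      simpa using klT_hasDerivAt (hp i) (hr i)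
    · refine HasDerivAt.fun_sum fun i _ => HasDerivAt.fun_sum fun j _ => ?_
      refine HasDerivAt.comp (0 : ℝ) (h₂ := klT (1 / (m * n))) ?_ (hent i j)
      simpa using klT_hasDerivAt hb (h0 i j)
  have hmin : IsLocalMin (fun t : ℝ => Freg c p α β (fun i j => π i j + t * D i j)) 0 := by
    have hev : ∀ᶠ t in 𝓝 (0 : ℝ), ∀ i j, 0 < π i j + t * D i j := by
      rw [Filter.eventually_all]; intro i
      rw [Filter.eventually_all]; intro j
      refine (hent i j).continuousAt.eventually_const_lt ?_
      simpa using h0 i j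
    filter_upwards [hev] with t ht
    have := hopt (fun i j => π i j + t * D i j) ⟨fun i j => (ht i j).le, by
      funext j
      simp [colSum, Finset.sum_add_distrib, ← Finset.mul_sum, hD, hc]⟩
    simpa using this
  have h := hmin.hasDerivAt_eq_zero hder
  rw [← h]
  simp only [Finset.mul_sum, ← Finset.sum_add_distrib]
  refine Finset.sum_congr rfl fun i _ => Finset.sum_congr rfl fun j _ => by ring

/-- Lemma 5: duality for the regularization path.
The minimum `F*` of `F^reg` over `Γ(*,q)` equals the maximum of the dual functional, the dual
problem has a unique maximizer `(u*,v*)`, and the primal-dual relations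
`π*𝟙 = e^{-αu*} ⊙ p` and `π* = e^{β(u*𝟙ᵀ + 𝟙(v*)ᵀ - c)} ⊙ π^ref` hold. -/
theorem regularization_path_duality
    {m n : ℕ} (p : Fin m → ℝ) (q : Fin n → ℝ) (c : Matrix (Fin m) (Fin n) ℝ)
    (hp : p ∈ simplexPos m) (hq : q ∈ simplexPos n)
    (α β : ℝ) (hα : 0 < α) (hβ : 0 < β)
    (πstar : Matrix (Fin m) (Fin n) ℝ)
    (hπstarmem : πstar ∈ GammaStar q)
    (hπstaropt : ∀ π' ∈ GammaStar (m := m) q, Freg c p α β πstar ≤ Freg c p α β π') :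
    ∃ (ustar : Fin m → ℝ) (vstar : Fin n → ℝ),
      (∀ (u : Fin m → ℝ) (v : Fin n → ℝ),
        dualFun p q c α β u v ≤ dualFun p q c α β ustar vstar) ∧
      (∀ (u : Fin m → ℝ) (v : Fin n → ℝ),
        (∀ (u' : Fin m → ℝ) (v' : Fin n → ℝ),
          dualFun p q c α β u' v' ≤ dualFun p q c α β u v) → u = ustar ∧ v = vstar) ∧
      Freg c p α β πstar = dualFun p q c α β ustar vstar ∧
      (∀ i, rowSum πstar i = Real.exp (-(α * ustar i)) * p i) ∧
      (∀ i j, πstar i j =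
        Real.exp (β * (ustar i + vstar j - c i j)) * piRef m n i j) := by
  obtain ⟨hp0, hp1⟩ := hp
  obtain ⟨hq0, hq1⟩ := hq
  obtain ⟨hs0, hs1⟩ := hπstarmem
  have hm : 0 < m := by
    rcases Nat.eq_zero_or_pos m with rfl | h
    · simp at hp1
    · exact h
  have hn : 0 < n := by
    rcases Nat.eq_zero_or_pos n with rfl | h
    · simp at hq1
    · exact h
  have hm' : (0 : ℝ) < m := by positivity
  have hn' : (0 : ℝ) < n := by positivity
  have hb : (0 : ℝ) < 1 / (m * n) := by positivity
  have : Nonempty (Fin n) := ⟨⟨0, hn⟩⟩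
  have hc : ∀ j, ∑ i, πstar i j = q j := fun j => congrFun hs1 j
  have hpos := star_pos p q c hm hn hp0 hp1 hq0 α β hα hβ πstar hs0 hc hπstaropt
  have hr : ∀ i, 0 < ∑ j, πstar i j := fun i =>
    Finset.sum_pos (fun j _ => hpos i j) Finset.univ_nonempty
  set g : Fin m → Fin n → ℝ := fun i j => c i j + α⁻¹ * Real.log ((∑ j, πstar i j) / p i)
      + β⁻¹ * Real.log (πstar i j / (1 / (m * n))) with hg
  have hgeq : ∀ i i' j, g i j = g i' j := by
    intro i i' j
    have h := star_foc p q c hm hn hp0 α β πstar hpos hc hπstaropt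
      (fun k l => if l = j then ((if k = i then 1 else 0) - (if k = i' then 1 else 0)) else 0)
      (by intro l; by_cases hl : l = j <;> simp [hl])
    have h' : ∑ k, ∑ l, (if l = j then ((if k = i then (1:ℝ) else 0)
        - (if k = i' then 1 else 0)) else 0) * g k l = 0 := h
    simp [sub_mul, Finset.sum_sub_distrib] at h'
    linarith
  set us : Fin m → ℝ := fun i => -(α⁻¹ * Real.log ((∑ j, πstar i j) / p i)) with hus
  set vs : Fin n → ℝ := fun j => g ⟨0, hm⟩ j with hvs
  have hrel1 : ∀ i, ∑ j, πstar i j = p i * Real.exp (-(α * us i)) := by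
    intro i
    have : -(α * us i) = Real.log ((∑ j, πstar i j) / p i) := by
      simp only [hus]; field_simp
    rw [this, Real.exp_log (div_pos (hr i) (hp0 i))]
    have := (hp0 i).ne'
    field_simp
  have hrel2 : ∀ i j, πstar i j = 1 / (m * n) * Real.exp (β * (us i + vs j - c i j)) := by
    intro i j
    have : β * (us i + vs j - c i j) = Real.log (πstar i j / (1 / (m * n))) := by
      have h1 : vs j = g i j := hgeq _ _ _
      rw [h1]
      simp only [hus, hg]
      have : β * β⁻¹ = 1 := mul_inv_cancel₀ hβ.ne'
      linear_combination (Real.log (πstar i j / (1 / (m * n)))) * this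
    rw [this, Real.exp_log (div_pos (hpos i j) hb)]
    exact (mul_div_cancel₀ _ hb.ne').symm
  have hgap := Freg_gap p q c hm hn α β hα hβ πstar hc
  have hstar : Freg c p α β πstar = dualFun p q c α β us vs := by
    rw [hgap us vs]
    rw [Finset.sum_eq_zero fun i _ => fgap_zero (hp0 i) (hrel1 i),
      Finset.sum_eq_zero fun i _ => Finset.sum_eq_zero fun j _ => fgap_zero hb (hrel2 i j)]
    simp
  have hn1 : ∀ u : Fin m → ℝ, ∀ i ∈ Finset.univ,
      0 ≤ fgap (∑ j, πstar i j) (p i) (-(α * u i)) := fun u i _ => fgap_nonneg (hr i) (hp0 i)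
  have hn2 : ∀ (u : Fin m → ℝ) (v : Fin n → ℝ), ∀ i ∈ Finset.univ, 
      0 ≤ ∑ j, fgap (πstar i j) (1 / (m * n)) (β * (u i + v j - c i j)) :=
    fun u v i _ => Finset.sum_nonneg fun j _ => fgap_nonneg (hpos i j) hb
  have hα' := inv_pos.2 hα
  have hβ' := inv_pos.2 hβ
  refine ⟨us, vs, ?_, ?_, hstar, ?_, ?_⟩
  · intro u v
    rw [← hstar, hgap u v]
    have h1 := mul_nonneg hα'.le (Finset.sum_nonneg (hn1 u))
    have h2 := mul_nonneg hβ'.le (Finset.sum_nonneg (hn2 u v))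
    linarith
  · intro u v hmax
    have h := hmax us vs
    rw [← hstar, hgap u v] at h
    have h1 := mul_nonneg hα'.le (Finset.sum_nonneg (hn1 u))
    have h2 := mul_nonneg hβ'.le (Finset.sum_nonneg (hn2 u v))
    have z1 : ∑ i, fgap (∑ j, πstar i j) (p i) (-(α * u i)) = 0 :=
      (mul_eq_zero.1 (le_antisymm (by linarith) h1)).resolve_left hα'.ne'
    have z2 : ∑ i, ∑ j, fgap (πstar i j) (1 / (m * n)) (β * (u i + v j - c i j)) = 0 :=
      (mul_eq_zero.1 (le_antisymm (by linarith) h2)).resolve_left hβ'.ne'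
    rw [Finset.sum_eq_zero_iff_of_nonneg (hn1 u)] at z1
    rw [Finset.sum_eq_zero_iff_of_nonneg (hn2 u v)] at z2
    have hu : u = us := by
      funext i
      have e : ∑ j, πstar i j = p i * Real.exp (-(α * u i)) := by
        by_contra hne
        exact (fgap_pos (hr i) (hp0 i) hne).ne' (z1 i (Finset.mem_univ i))
      rw [hrel1 i] at e
      have e' := Real.exp_injective (mul_left_cancel₀ (hp0 i).ne' e)
      exact (mul_left_cancel₀ hα.ne' (neg_injective e')).symm
    refine ⟨hu, ?_⟩
    subst hu
    funext j
    have z3 := z2 ⟨0, hm⟩ (Finset.mem_univ _)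
    rw [Finset.sum_eq_zero_iff_of_nonneg fun j _ => fgap_nonneg (hpos _ j) hb] at z3
    have e : πstar ⟨0, hm⟩ j = 1 / (m * n) * Real.exp (β * (us ⟨0, hm⟩ + v j - c ⟨0, hm⟩ j)) := by
      by_contra hne
      exact (fgap_pos (hpos _ j) hb hne).ne' (z3 j (Finset.mem_univ j))
    rw [hrel2 _ j] at e
    have e' := mul_left_cancel₀ hβ.ne' (Real.exp_injective (mul_left_cancel₀ hb.ne' e))
    linarith
  · intro i
    rw [mul_comm]; exact hrel1 i
  · intro i j
    rw [mul_comm]; exact hrel2 i j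

end
end

section
/- Let p ∈ Δ*_m, q ∈ Δ*_n, c ∈ ℝ^{m×n}. Assume the optimal transport problem OT(p,q) admits a unique pair of Kantorovich potentials (u_∞, v_∞) up to translation (i.e., every other dual-optimal pair is (u_∞ + λ𝟙, v_∞ − λ𝟙) for some λ ∈ ℝ). Let (β_t) be a schedule with β_t → ∞ and α_t = β_t − β_{t−1} > 0 with α_t → 0, and let (u_t) be any sequence in ℝ^m converging to u_∞ up to constant shifts (i.e., inf_{λ∈ℝ} ‖u_t − u_∞ + λ𝟙‖_∞ → 0). Define p̃_t = Z_t^{-1} e^{α_t u_t} ⊙ p with Z_t = ‖e^{α_t u_t} ⊙ p‖₁, and let π̃^reg_t be the unique minimizer over Γ(*,q) of ⟨c,π⟩ + (1/α_t) KL(π𝟙 | p̃_t) + (1/β_t) KL(π | π^ref). Then ‖π̃^reg_t 𝟙 − p‖₁ = o(α_t) as t → ∞. -/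
open Finset Filter Topology ENNReal

noncomputable section

lemma kl_tangent (x y b : ℝ) (hx : 0 ≤ x) (hy : 0 < y ∨ y = x) (hb : 0 < b) :
    (y * Real.log (y / b) - y + b) - (x * Real.log (x / b) - x + b)
      ≤ Real.log (y / b) * (y - x) := by
  rcases hy with hy | rfl
  · rcases hx.eq_or_lt with rfl | hx
    · simp; nlinarith
    · have h := Real.log_le_sub_one_of_pos (div_pos hy hx)
      rw [Real.log_div hy.ne' hx.ne'] at h
      rw [Real.log_div hy.ne' hb.ne', Real.log_div hx.ne' hb.ne']
      have h2 : x * (Real.log y - Real.log x) ≤ x * (y / x - 1) :=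
        mul_le_mul_of_nonneg_left h hx.le
      have h3 : x * (y / x - 1) = y - x := by field_simp
      nlinarith
  · simp

lemma foc_eps {m n : ℕ} (s : Fin m → ℝ) (hs : ∀ i, 0 < s i) (q : Fin n → ℝ)
    (c : Matrix (Fin m) (Fin n) ℝ) (hm : 0 < m) (hn : 0 < n)
    (a b : ℝ) (ha : 0 < a) (hb : 0 < b) (π : Matrix (Fin m) (Fin n) ℝ)
    (hmem : π ∈ GammaStar q)
    (hmin : ∀ π' ∈ GammaStar (m := m) q, Freg c s a b π ≤ Freg c s a b π')
    (i k : Fin m) (j : Fin n) (hik : i ≠ k) (e : ℝ) (he : 0 < e) (hek : e < π k j) :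
    c k j + b⁻¹ * Real.log ((π k j - e) / (1 / (m * n))) + a⁻¹ * Real.log ((rowSum π k - e) / s k)
    ≤ c i j + b⁻¹ * Real.log ((π i j + e) / (1 / (m * n)))
      + a⁻¹ * Real.log ((rowSum π i + e) / s i) := by
  obtain ⟨hnn, hcol⟩ := hmem
  have hmR : (0 : ℝ) < m := by exact_mod_cast hm
  have hnR : (0 : ℝ) < n := by exact_mod_cast hn
  have href : (0 : ℝ) < 1 / (m * n) := by positivity
  set D : Matrix (Fin m) (Fin n) ℝ := fun l j' =>
    if j' = j then ((if l = i then e else 0) - (if l = k then e else 0)) else 0 with hD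
  have hDcol : ∀ j', ∑ l, D l j' = 0 := by
    intro j'
    simp only [hD]
    split_ifs
    · simp
    · simp
  have hDrow : ∀ l, ∑ j', D l j' = (if l = i then e else 0) - (if l = k then e else 0) := by
    intro l
    simp [hD]
  have hrow : ∀ l, rowSum (π + D) l = rowSum π l + ∑ j', D l j' := by
    intro l
    simp [rowSum, Finset.sum_add_distrib]
  have hle : ∀ l j', π l j' ≤ rowSum π l := fun l j' =>
    Finset.single_le_sum (f := fun j' => π l j') (fun x _ => hnn l x) (Finset.mem_univ j')
  have hadd : ∀ l j', (π + D) l j' = π l j' + (if j' = j then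
      ((if l = i then e else 0) - (if l = k then e else 0)) else 0) := fun _ _ => rfl
  have hpos : ∀ l j', 0 < (π + D) l j' ∨ (π + D) l j' = π l j' := by
    intro l j'
    rw [hadd]
    have := hnn l j'
    by_cases hj : j' = j
    · subst hj
      by_cases hi : l = i
      · subst hi; left; simp [hik]; linarith
      · by_cases hk : l = k
        · subst hk; left; simp [hi]; linarith
        · right; simp [hi, hk]
    · right; simp [hj]
  have hrpos : ∀ l, 0 < rowSum (π + D) l ∨ rowSum (π + D) l = rowSum π l := by
    intro l
    rw [hrow, hDrow]
    have h1 := hle l j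
    have := hnn l j
    by_cases hi : l = i
    · subst hi; left; simp [hik]; linarith
    · by_cases hk : l = k
      · subst hk; left; simp [hi]; linarith
      · right; simp [hi, hk]
  have hmem' : π + D ∈ GammaStar (m := m) q := by
    refine ⟨fun l j' => ?_, ?_⟩
    · rcases hpos l j' with h | h
      · exact h.le
      · rw [h]; exact hnn l j'
    · rw [← hcol]; funext j'
      simp [colSum, Finset.sum_add_distrib, hDcol]
  have hF := hmin _ hmem'
  have h1 : frob c (π + D) - frob c π = ∑ l, ∑ j', c l j' * D l j' := by
    simp only [frob, ← Finset.sum_sub_distrib]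
    refine Finset.sum_congr rfl fun l _ => Finset.sum_congr rfl fun j' _ => ?_
    simp; ring
  have h2 : KLmat (π + D) (piRef m n) - KLmat π (piRef m n)
      ≤ ∑ l, ∑ j', Real.log ((π + D) l j' / (1 / (m * n))) * D l j' := by
    simp only [KLmat, ← Finset.sum_sub_distrib]
    refine Finset.sum_le_sum fun l _ => Finset.sum_le_sum fun j' _ => ?_
    have := kl_tangent (π l j') ((π + D) l j') (1 / (m * n)) (hnn l j') (hpos l j') href
    have h3 : (π + D) l j' - π l j' = D l j' := by simp
    rw [h3] at this
    exact this
  have h3 : KLvec (rowSum (π + D)) s - KLvec (rowSum π) s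
      ≤ ∑ l, Real.log (rowSum (π + D) l / s l) * ∑ j', D l j' := by
    simp only [KLvec, ← Finset.sum_sub_distrib]
    refine Finset.sum_le_sum fun l _ => ?_
    have := kl_tangent (rowSum π l) (rowSum (π + D) l) (s l)
      (Finset.sum_nonneg fun j' _ => hnn l j') (hrpos l) (hs l)
    have h3 : rowSum (π + D) l - rowSum π l = ∑ j', D l j' := by rw [hrow]; ring
    rw [h3] at this
    exact this
  have e1 : ∀ g : Fin m → Fin n → ℝ, ∑ l, ∑ j', g l j' * D l j' = e * (g i j - g k j) := by
    intro g
    have : ∀ l, ∑ j', g l j' * D l j'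
        = (if l = i then e * g l j else 0) - (if l = k then e * g l j else 0) := by
      intro l
      simp only [hD, mul_ite, mul_zero, Finset.sum_ite_eq', Finset.mem_univ, if_true]
      split_ifs <;> ring
    simp only [this, Finset.sum_sub_distrib, Finset.sum_ite_eq', Finset.mem_univ, if_true]
    ring
  have e2 : ∀ g : Fin m → ℝ, ∑ l, g l * ∑ j', D l j' = e * (g i - g k) := by
    intro g
    simp only [hDrow, mul_sub, mul_ite, mul_zero, Finset.sum_sub_distrib, Finset.sum_ite_eq',
      Finset.mem_univ, if_true]
    ring
  rw [e1 (fun l j' => c l j')] at h1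
  rw [e1 (fun l j' => Real.log ((π + D) l j' / (1 / (m * n))))] at h2
  rw [e2 (fun l => Real.log (rowSum (π + D) l / s l))] at h3
  have vi : (π + D) i j = π i j + e := by rw [hadd]; simp [hik]
  have vk : (π + D) k j = π k j - e := by rw [hadd]; simp [hik.symm]; ring
  have ri : rowSum (π + D) i = rowSum π i + e := by rw [hrow, hDrow]; simp [hik]
  have rk : rowSum (π + D) k = rowSum π k - e := by rw [hrow, hDrow]; simp [hik.symm]; ring
  simp only [vi, vk] at h2
  simp only [ri, rk] at h3
  have h2' := mul_le_mul_of_nonneg_left h2 (inv_pos.2 hb).le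
  have h3' := mul_le_mul_of_nonneg_left h3 (inv_pos.2 ha).le
  simp only [Freg] at hF
  have := fun x : ℝ => (mul_le_mul_iff_right₀ he (b := (0:ℝ)) (c := x))
  rw [← sub_nonneg, ← this]
  nlinarith

lemma foc {m n : ℕ} (s : Fin m → ℝ) (hs : ∀ i, 0 < s i) (q : Fin n → ℝ) (hq : ∀ j, 0 < q j)
    (c : Matrix (Fin m) (Fin n) ℝ) (hm : 0 < m) (hn : 0 < n)
    (a b : ℝ) (ha : 0 < a) (hb : 0 < b) (π : Matrix (Fin m) (Fin n) ℝ)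
    (hmem : π ∈ GammaStar q)
    (hmin : ∀ π' ∈ GammaStar (m := m) q, Freg c s a b π ≤ Freg c s a b π') :
    (∀ i j, 0 < π i j) ∧ ∀ i k j,
      c k j + b⁻¹ * Real.log (π k j) + a⁻¹ * Real.log (rowSum π k / s k)
      = c i j + b⁻¹ * Real.log (π i j) + a⁻¹ * Real.log (rowSum π i / s i) := by
  have key := foc_eps s hs q c hm hn a b ha hb π hmem hmin
  obtain ⟨hnn, hcol⟩ := hmem
  have hmR : (0 : ℝ) < m := by exact_mod_cast hm
  have hnR : (0 : ℝ) < n := by exact_mod_cast hn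
  have href : (0 : ℝ) < 1 / (m * n) := by positivity
  set ρ : ℝ := 1 / (m * n) with hρ
  have hle : ∀ l j', π l j' ≤ rowSum π l := fun l j' =>
    Finset.single_le_sum (f := fun j' => π l j') (fun x _ => hnn l x) (Finset.mem_univ j')
  have hpos : ∀ i j, 0 < π i j := by
    intro i j
    by_contra hcon
    have h0 : π i j = 0 := le_antisymm (not_lt.1 hcon) (hnn i j)
    obtain ⟨k, hk⟩ : ∃ k, 0 < π k j := by
      by_contra hno
      push Not at hno
      have : colSum π j ≤ 0 := Finset.sum_nonpos fun k _ => hno k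
      rw [hcol] at this
      exact absurd (hq j) (not_lt.2 this)
    have hik : i ≠ k := by rintro rfl; linarith
    set d := π k j / 2 with hd
    have hdpos : 0 < d := by positivity
    set L := c k j + b⁻¹ * Real.log (d / ρ) + a⁻¹ * Real.log (d / s k) with hL
    set U := c i j + a⁻¹ * Real.log ((rowSum π i + d) / s i) - b⁻¹ * Real.log ρ with hU
    set e := min d (Real.exp (b * (L - U) - 1)) with he
    have hepos : 0 < e := lt_min hdpos (Real.exp_pos _)
    have hed : e ≤ d := min_le_left _ _
    have hloge : Real.log e ≤ b * (L - U) - 1 := by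
      rw [Real.log_le_iff_le_exp hepos]; exact min_le_right _ _
    have hr0 : 0 ≤ rowSum π i := Finset.sum_nonneg fun j' _ => hnn i j'
    have hk2 : π k j = 2 * d := by rw [hd]; ring
    have h := key i k j hik e hepos (by linarith)
    have hrk := hle k j
    have l1 : Real.log (d / ρ) ≤ Real.log ((π k j - e) / ρ) :=
      Real.log_le_log (by positivity) (by gcongr; linarith)
    have l2 : Real.log (d / s k) ≤ Real.log ((rowSum π k - e) / s k) :=
      Real.log_le_log (div_pos hdpos (hs k)) (by have := (hs k).le; gcongr; linarith)
    have l3 : Real.log ((rowSum π i + e) / s i) ≤ Real.log ((rowSum π i + d) / s i) :=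
      Real.log_le_log (div_pos (by linarith) (hs i)) (by have := (hs i).le; gcongr)
    rw [h0, zero_add, Real.log_div hepos.ne' href.ne'] at h
    have m1 := mul_le_mul_of_nonneg_left l1 (inv_pos.2 hb).le
    have m2 := mul_le_mul_of_nonneg_left l2 (inv_pos.2 ha).le
    have m3 := mul_le_mul_of_nonneg_left l3 (inv_pos.2 ha).le
    have m4 := mul_le_mul_of_nonneg_left hloge (inv_pos.2 hb).le
    have m5 : b⁻¹ * (b * (L - U) - 1) = L - U - b⁻¹ := by field_simp
    have := inv_pos.2 hb
    rw [mul_sub] at h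
    linarith
  refine ⟨hpos, ?_⟩
  have hrpos : ∀ i, 0 < rowSum π i := fun i => lt_of_lt_of_le (hpos i ⟨0, hn⟩) (hle i _)
  have half : ∀ i k j,
      c k j + b⁻¹ * Real.log (π k j) + a⁻¹ * Real.log (rowSum π k / s k)
      ≤ c i j + b⁻¹ * Real.log (π i j) + a⁻¹ * Real.log (rowSum π i / s i) := by
    intro i k j
    by_cases hik : i = k
    · subst hik; exact le_rfl
    have hev : ∀ᶠ e in 𝓝[>] (0:ℝ), 0 < e ∧ e < π k j :=
      Ioo_mem_nhdsGT (hpos k j)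
    have t1 : Tendsto (fun e : ℝ => c k j + b⁻¹ * Real.log ((π k j - e) / ρ)
        + a⁻¹ * Real.log ((rowSum π k - e) / s k)) (𝓝[>] 0)
        (𝓝 (c k j + b⁻¹ * Real.log ((π k j - 0) / ρ)
        + a⁻¹ * Real.log ((rowSum π k - 0) / s k))) := by
      apply tendsto_nhdsWithin_of_tendsto_nhds
      have hz1 : (π k j - 0) / ρ ≠ 0 := by rw [sub_zero]; exact (div_pos (hpos k j) href).ne'
      have hz2 : (rowSum π k - 0) / s k ≠ 0 := by
        rw [sub_zero]; exact (div_pos (hrpos k) (hs k)).ne'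
      have : ContinuousAt (fun e : ℝ => c k j + b⁻¹ * Real.log ((π k j - e) / ρ)
        + a⁻¹ * Real.log ((rowSum π k - e) / s k)) 0 := by
        have c1 : ContinuousAt (fun e : ℝ => Real.log ((π k j - e) / ρ)) 0 :=
          ContinuousAt.log (by fun_prop) hz1
        have c2 : ContinuousAt (fun e : ℝ => Real.log ((rowSum π k - e) / s k)) 0 :=
          ContinuousAt.log (by fun_prop) hz2
        exact (continuousAt_const.add (continuousAt_const.mul c1)).add
          (continuousAt_const.mul c2)
      exact this
    have t2 : Tendsto (fun e : ℝ => c i j + b⁻¹ * Real.log ((π i j + e) / ρ)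
        + a⁻¹ * Real.log ((rowSum π i + e) / s i)) (𝓝[>] 0)
        (𝓝 (c i j + b⁻¹ * Real.log ((π i j + 0) / ρ)
        + a⁻¹ * Real.log ((rowSum π i + 0) / s i))) := by
      apply tendsto_nhdsWithin_of_tendsto_nhds
      have hz1 : (π i j + 0) / ρ ≠ 0 := by rw [add_zero]; exact (div_pos (hpos i j) href).ne'
      have hz2 : (rowSum π i + 0) / s i ≠ 0 := by
        rw [add_zero]; exact (div_pos (hrpos i) (hs i)).ne'
      have : ContinuousAt (fun e : ℝ => c i j + b⁻¹ * Real.log ((π i j + e) / ρ)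
        + a⁻¹ * Real.log ((rowSum π i + e) / s i)) 0 := by
        have c1 : ContinuousAt (fun e : ℝ => Real.log ((π i j + e) / ρ)) 0 :=
          ContinuousAt.log (by fun_prop) hz1
        have c2 : ContinuousAt (fun e : ℝ => Real.log ((rowSum π i + e) / s i)) 0 :=
          ContinuousAt.log (by fun_prop) hz2
        exact (continuousAt_const.add (continuousAt_const.mul c1)).add
          (continuousAt_const.mul c2)
      exact this
    have := le_of_tendsto_of_tendsto t1 t2
      (hev.mono fun e he => key i k j hik e he.1 he.2)
    rw [sub_zero, sub_zero, add_zero, add_zero, Real.log_div (hpos k j).ne' href.ne',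
      Real.log_div (hpos i j).ne' href.ne', mul_sub, mul_sub] at this
    linarith
  intro i k j
  exact le_antisymm (half i k j) (half k i j)

/-- Near-optimal dual pairs are close to the unique optimal one (up to a shift). -/
lemma near_opt {m n : ℕ} (p : Fin m → ℝ) (q : Fin n → ℝ) (c : Matrix (Fin m) (Fin n) ℝ)
    (hp : p ∈ simplexPos m) (hq : q ∈ simplexPos n) (hm : 0 < m)
    (uinf : Fin m → ℝ) (vinf : Fin n → ℝ)
    (hfeas : ∀ i j, uinf i + vinf j ≤ c i j)
    (hopt : ∀ (u : Fin m → ℝ) (v : Fin n → ℝ), (∀ i j, u i + v j ≤ c i j) →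
      ∑ i, p i * u i + ∑ j, q j * v j ≤ ∑ i, p i * uinf i + ∑ j, q j * vinf j)
    (huniq : ∀ (u : Fin m → ℝ) (v : Fin n → ℝ), (∀ i j, u i + v j ≤ c i j) →
      ∑ i, p i * u i + ∑ j, q j * v j = ∑ i, p i * uinf i + ∑ j, q j * vinf j →
      ∃ lam : ℝ, u = (fun i => uinf i + lam) ∧ v = (fun j => vinf j - lam))
    (ε : ℝ) (hε : 0 < ε) :
    ∃ η > 0, ∀ (w : Fin m → ℝ) (v : Fin n → ℝ), (∀ i j, w i + v j ≤ c i j) →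
      ∑ i, p i * uinf i + ∑ j, q j * vinf j - η < ∑ i, p i * w i + ∑ j, q j * v j →
      ∃ lam : ℝ, ∀ i, |w i - uinf i - lam| ≤ ε := by
  obtain ⟨hp0, hp1⟩ := hp
  obtain ⟨hq0, hq1⟩ := hq
  set i0 : Fin m := ⟨0, hm⟩
  set G : (Fin m → ℝ) × (Fin n → ℝ) → ℝ := fun x =>
    ∑ i, p i * x.1 i + ∑ j, q j * x.2 j with hG
  have hGc : Continuous G := by simp only [hG]; fun_prop
  set S : Set ((Fin m → ℝ) × (Fin n → ℝ)) := {x | x.1 i0 = 0 ∧ ‖x.1‖ = ε ∧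
    (∀ i j, x.1 i + x.2 j ≤ c i j - uinf i - vinf j) ∧ -1 ≤ G x} with hS
  have hcl : IsClosed S := by
    have : S = {x | x.1 i0 = 0} ∩ {x | ‖x.1‖ = ε} ∩
      (⋂ i, ⋂ j, {x | x.1 i + x.2 j ≤ c i j - uinf i - vinf j}) ∩ {x | -1 ≤ G x} := by
      ext x; simp [hS, and_assoc]
    rw [this]
    refine (((isClosed_eq (by fun_prop) (by fun_prop)).inter
      (isClosed_eq (by fun_prop) (by fun_prop))).inter
      (isClosed_iInter fun i => isClosed_iInter fun j =>
        isClosed_le (by fun_prop) (by fun_prop))).inter (isClosed_le (by fun_prop) hGc)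
  -- upper bound for the second component
  obtain ⟨B, hB0, hB⟩ : ∃ B : ℝ, 0 ≤ B ∧ ∀ x ∈ S, ∀ j, x.2 j ≤ B := by
    refine ⟨∑ j, |c i0 j - uinf i0 - vinf j|, by positivity, fun x hx j => ?_⟩
    have h1 := hx.2.2.1 i0 j
    rw [hx.1, zero_add] at h1
    exact (h1.trans (le_abs_self _)).trans
      (Finset.single_le_sum (f := fun j => |c i0 j - uinf i0 - vinf j|)
        (fun _ _ => abs_nonneg _) (Finset.mem_univ j))
  have hlow : ∀ x ∈ S, ∀ j, -(1 + ε + B) / q j ≤ x.2 j := by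
    intro x hx j
    have h1 : ∑ i, p i * x.1 i ≤ ε := by
      calc ∑ i, p i * x.1 i ≤ ∑ i, p i * ε := by
            refine Finset.sum_le_sum fun i _ => mul_le_mul_of_nonneg_left ?_ (hp0 i).le
            have := norm_le_pi_norm x.1 i
            rw [hx.2.1] at this
            exact (le_abs_self _).trans this
        _ = ε := by rw [← Finset.sum_mul, hp1, one_mul]
    have h2 : ∑ j', q j' * x.2 j' ≤ q j * x.2 j + B := by
      rw [← Finset.add_sum_erase _ _ (Finset.mem_univ j)]
      have : ∑ j' ∈ Finset.univ.erase j, q j' * x.2 j' ≤ B := by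
        calc ∑ j' ∈ Finset.univ.erase j, q j' * x.2 j'
            ≤ ∑ j' ∈ Finset.univ.erase j, q j' * B :=
              Finset.sum_le_sum fun j' _ => mul_le_mul_of_nonneg_left (hB x hx j') (hq0 j').le
          _ ≤ ∑ j', q j' * B := Finset.sum_le_sum_of_subset_of_nonneg (Finset.erase_subset _ _)
              fun j' _ _ => mul_nonneg (hq0 j').le hB0
          _ = B := by rw [← Finset.sum_mul, hq1, one_mul]
      linarith
    have h3 := hx.2.2.2
    simp only [hG] at h3
    rw [div_le_iff₀ (hq0 j)]
    linarith
  have hcomp : IsCompact S := by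
    refine IsCompact.of_isClosed_subset
      ((isCompact_closedBall (0 : Fin m → ℝ) ε).prod
        (isCompact_Icc (a := fun j => -(1 + ε + B) / q j) (b := fun _ : Fin n => B))) hcl ?_
    intro x hx
    refine ⟨?_, fun j => hlow x hx j, fun j => hB x hx j⟩
    simp [hx.2.1]
  have hneg : ∀ x ∈ S, G x < 0 := by
    intro x hx
    have hf : ∀ i j, (fun i => uinf i + x.1 i) i + (fun j => vinf j + x.2 j) j ≤ c i j := by
      intro i j
      have := hx.2.2.1 i j
      change uinf i + x.1 i + (vinf j + x.2 j) ≤ c i j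
      linarith
    have ho := hopt _ _ hf
    have hun := huniq _ _ hf
    simp only [mul_add, Finset.sum_add_distrib] at ho hun
    have hle : G x ≤ 0 := by simp only [hG]; linarith
    refine lt_of_le_of_ne hle fun h0 => ?_
    simp only [hG] at h0
    obtain ⟨lam, hl, -⟩ := hun (by linarith)
    have hl' : ∀ i, x.1 i = lam := fun i => by
      have : uinf i + x.1 i = uinf i + lam := congrFun hl i
      linarith
    have : lam = 0 := by rw [← hl' i0]; exact hx.1
    have hz : x.1 = 0 := by funext i; rw [hl' i, this]; rfl
    have := hx.2.1
    rw [hz, norm_zero] at this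
    linarith
  obtain ⟨η, hη, hη1, hηS⟩ : ∃ η : ℝ, 0 < η ∧ η ≤ 1 ∧ ∀ x ∈ S, G x ≤ -η := by
    rcases S.eq_empty_or_nonempty with he | hne
    · exact ⟨1, one_pos, le_rfl, fun x hx => by rw [he] at hx; exact hx.elim⟩
    · obtain ⟨x0, hx0, hmax⟩ := hcomp.exists_isMaxOn hne hGc.continuousOn
      have h0 := hneg x0 hx0
      refine ⟨min 1 (-(G x0)), lt_min one_pos (by linarith), min_le_left _ _, fun x hx => ?_⟩
      have h1 : G x ≤ G x0 := hmax hx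
      have := min_le_right 1 (-(G x0))
      linarith
  refine ⟨η, hη, fun w v hwv hval => ?_⟩
  set lam := w i0 - uinf i0 with hlam
  refine ⟨lam, ?_⟩
  set x : Fin m → ℝ := fun i => w i - uinf i - lam with hx
  set y : Fin n → ℝ := fun j => v j - vinf j + lam with hy
  by_contra hcon
  have hbig : ε < ‖x‖ := by
    by_contra hnot
    apply hcon
    intro i
    exact (norm_le_pi_norm x i).trans (not_lt.1 hnot)
  have hGxy : G (x, y) = (∑ i, p i * w i + ∑ j, q j * v j)
      - (∑ i, p i * uinf i + ∑ j, q j * vinf j) := by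
    simp only [hG, hx, hy, mul_add, mul_sub, Finset.sum_add_distrib, Finset.sum_sub_distrib,
      ← Finset.sum_mul, hp1, hq1]
    ring
  have hG0 : G (x, y) ≤ 0 := by rw [hGxy]; linarith [hopt w v hwv]
  have hnx : 0 < ‖x‖ := hε.trans hbig
  set θ := ε / ‖x‖ with hθ
  have hθ0 : 0 < θ := div_pos hε hnx
  have hθ1 : θ ≤ 1 := (div_le_one hnx).2 hbig.le
  have hGθ : G (θ • x, θ • y) = θ * G (x, y) := by
    simp only [hG, Pi.smul_apply, smul_eq_mul, mul_add, Finset.mul_sum]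
    congr 1 <;> exact Finset.sum_congr rfl fun _ _ => by ring
  have hge : G (x, y) ≤ G (θ • x, θ • y) := by rw [hGθ]; nlinarith
  have hmemS : (θ • x, θ • y) ∈ S := by
    refine ⟨?_, ?_, ?_, ?_⟩
    · simp [hx, hlam]
    · simp only [norm_smul, Real.norm_eq_abs, abs_of_pos hθ0]
      rw [hθ]; field_simp
    · intro i j
      have h1 := hfeas i j
      have h2 := hwv i j
      simp only [Pi.smul_apply, smul_eq_mul]
      have h3 : x i + y j ≤ c i j - uinf i - vinf j := by simp only [hx, hy]; linarith
      nlinarith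
    · linarith
  have := hηS _ hmemS
  linarith

lemma step {m n : ℕ} (p : Fin m → ℝ) (q : Fin n → ℝ) (c : Matrix (Fin m) (Fin n) ℝ)
    (hp : p ∈ simplexPos m) (hq : q ∈ simplexPos n) (hm : 0 < m) (hn : 0 < n)
    (uinf : Fin m → ℝ) (vinf : Fin n → ℝ)
    (hfeas : ∀ i j, uinf i + vinf j ≤ c i j)
    (a b : ℝ) (ha : 0 < a) (hb : 0 < b) (u : Fin m → ℝ) (δ lam : ℝ)
    (hδ : ∀ i, |u i - uinf i + lam| ≤ δ)
    (s : Fin m → ℝ)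
    (hs : ∀ i, s i = Real.exp (a * u i) * p i / (∑ i', Real.exp (a * u i') * p i'))
    (π : Matrix (Fin m) (Fin n) ℝ) (hmem : π ∈ GammaStar q)
    (hmin : ∀ π' ∈ GammaStar (m := m) q, Freg c s a b π ≤ Freg c s a b π') :
    ∃ (w : Fin m → ℝ) (v : Fin n → ℝ), (∀ i j, w i + v j ≤ c i j) ∧
      (∑ i, p i * uinf i + ∑ j, q j * vinf j - (m * n * b⁻¹ + 2 * δ)
        ≤ ∑ i, p i * w i + ∑ j, q j * v j) ∧
      (∀ i, rowSum π i = p i * Real.exp (a * (u i - w i))) ∧ ∑ i, rowSum π i = 1 := by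
  obtain ⟨hp0, hp1⟩ := hp
  obtain ⟨hq0, hq1⟩ := hq
  set i0 : Fin m := ⟨0, hm⟩
  have hZ : 0 < ∑ i', Real.exp (a * u i') * p i' :=
    Finset.sum_pos (fun i _ => mul_pos (Real.exp_pos _) (hp0 i)) ⟨i0, Finset.mem_univ _⟩
  set Z := ∑ i', Real.exp (a * u i') * p i' with hZdef
  have hspos : ∀ i, 0 < s i := fun i => by
    rw [hs]; exact div_pos (mul_pos (Real.exp_pos _) (hp0 i)) hZ
  obtain ⟨hπ, hfoc⟩ := foc s hspos q hq0 c hm hn a b ha hb π hmem hmin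
  obtain ⟨hnn, hcol⟩ := hmem
  have hle : ∀ l j', π l j' ≤ rowSum π l := fun l j' =>
    Finset.single_le_sum (f := fun j' => π l j') (fun x _ => hnn l x) (Finset.mem_univ j')
  have hrpos : ∀ i, 0 < rowSum π i := fun i => lt_of_lt_of_le (hπ i ⟨0, hn⟩) (hle i _)
  have hcol' : ∀ j, ∑ i, π i j = q j := fun j => congrFun hcol j
  have hπ1 : ∀ i j, π i j ≤ 1 := by
    intro i j
    have h1 : π i j ≤ ∑ i, π i j :=
      Finset.single_le_sum (f := fun i => π i j) (fun x _ => hnn x j) (Finset.mem_univ i)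
    rw [hcol'] at h1
    have h2 : q j ≤ ∑ j, q j :=
      Finset.single_le_sum (f := q) (fun x _ => (hq0 x).le) (Finset.mem_univ j)
    linarith
  have hrsum : ∑ i, rowSum π i = 1 := by
    have h1 : ∑ i, rowSum π i = ∑ j, ∑ i, π i j := Finset.sum_comm
    rw [h1]
    simp only [hcol', hq1]
  set w : Fin m → ℝ := fun i => u i - a⁻¹ * Real.log (rowSum π i / p i) with hw
  have hlogs : ∀ i, a⁻¹ * Real.log (rowSum π i / s i) = - w i + a⁻¹ * Real.log Z := by
    intro i
    rw [hs i, Real.log_div (hrpos i).ne' (div_pos (mul_pos (Real.exp_pos _) (hp0 i)) hZ).ne',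
      Real.log_div (mul_pos (Real.exp_pos _) (hp0 i)).ne' hZ.ne',
      Real.log_mul (Real.exp_pos _).ne' (hp0 i).ne', Real.log_exp]
    simp only [hw]
    rw [Real.log_div (hrpos i).ne' (hp0 i).ne']
    field_simp
    ring
  set v : Fin n → ℝ := fun j => c i0 j - w i0 + b⁻¹ * Real.log (π i0 j) with hv
  have hwv : ∀ i j, w i + v j = c i j + b⁻¹ * Real.log (π i j) := by
    intro i j
    have := hfoc i i0 j
    rw [hlogs, hlogs] at this
    simp only [hv]
    linarith
  have hr : ∀ i, rowSum π i = p i * Real.exp (a * (u i - w i)) := by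
    intro i
    have : a * (u i - w i) = Real.log (rowSum π i / p i) := by
      simp only [hw]; field_simp; ring
    rw [this, Real.exp_log (div_pos (hrpos i) (hp0 i))]
    have := (hp0 i).ne'
    field_simp
  refine ⟨w, v, ?_, ?_, hr, hrsum⟩
  · intro i j
    rw [hwv]
    have := mul_nonpos_of_nonneg_of_nonpos (inv_pos.2 hb).le
      (Real.log_nonpos (hnn i j) (hπ1 i j))
    linarith
  · -- pairing with the plan
    have pair : ∀ (f : Fin m → ℝ) (g : Fin n → ℝ),
        ∑ i, ∑ j, π i j * (f i + g j) = ∑ i, rowSum π i * f i + ∑ j, q j * g j := by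
      intro f g
      simp only [mul_add, Finset.sum_add_distrib]
      congr 1
      · simp only [rowSum, Finset.sum_mul]
      · rw [Finset.sum_comm]
        simp only [← Finset.sum_mul, hcol']
    have h1 : ∑ i, ∑ j, (π i j * (uinf i + vinf j) - b⁻¹)
        ≤ ∑ i, ∑ j, π i j * (w i + v j) := by
      refine Finset.sum_le_sum fun i _ => Finset.sum_le_sum fun j _ => ?_
      rw [hwv, mul_add]
      have e1 := mul_le_mul_of_nonneg_left (hfeas i j) (hnn i j)
      have e2 : -1 ≤ π i j * Real.log (π i j) := by
        have h := Real.log_le_sub_one_of_pos (inv_pos.2 (hπ i j))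
        rw [Real.log_inv] at h
        have h2 := mul_le_mul_of_nonneg_left h (hnn i j)
        rw [mul_sub, mul_inv_cancel₀ (hπ i j).ne'] at h2
        have := hnn i j
        linarith
      have e3 := mul_le_mul_of_nonneg_left e2 (inv_pos.2 hb).le
      have e4 : π i j * (b⁻¹ * Real.log (π i j)) = b⁻¹ * (π i j * Real.log (π i j)) := by ring
      linarith
    simp only [Finset.sum_sub_distrib] at h1
    rw [pair, pair] at h1
    simp only [Finset.sum_const, Finset.card_univ, Fintype.card_fin, nsmul_eq_mul] at h1
    have h2 : ∑ i, (rowSum π i * (w i - uinf i) - δ * (p i + rowSum π i)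
        + lam * (rowSum π i - p i)) ≤ ∑ i, p i * (w i - uinf i) := by
      refine Finset.sum_le_sum fun i _ => ?_
      have hsgn : 0 ≤ (p i - rowSum π i) * (w i - u i) := by
        have hpi := hp0 i
        rcases le_total (w i) (u i) with h | h
        · have : 1 ≤ Real.exp (a * (u i - w i)) :=
            Real.one_le_exp (mul_nonneg ha.le (by linarith))
          have h3 : p i ≤ rowSum π i := by rw [hr]; nlinarith
          exact mul_nonneg_of_nonpos_of_nonpos (by linarith) (by linarith)
        · have : Real.exp (a * (u i - w i)) ≤ 1 :=
            Real.exp_le_one_iff.2 (mul_nonpos_of_nonneg_of_nonpos ha.le (by linarith))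
          have h3 : rowSum π i ≤ p i := by rw [hr]; nlinarith
          exact mul_nonneg (by linarith) (by linarith)
      have hd := abs_le.1 (hδ i)
      have h5 := mul_le_mul_of_nonneg_left hd.1 (hp0 i).le
      have h6 := mul_le_mul_of_nonneg_left hd.2 (hrpos i).le
      nlinarith
    simp only [mul_sub, mul_add, Finset.sum_sub_distrib, Finset.sum_add_distrib,
      ← Finset.mul_sum, hp1, hrsum] at h2
    linarith

/-- Proposition 2: asymptotic debiasing.
If `OT(p,q)` has a unique pair of Kantorovich potentials `(u∞,v∞)` up to translation,
`β_t → ∞`, `α_t = β_t - β_{t-1} > 0` with `α_t → 0`, and `u_t → u∞` up to constant shifts,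
then the regularization path computed with `p` replaced by the debiased marginal
`p̃_t = Z_t⁻¹ e^{α_t u_t} ⊙ p` satisfies `‖π̃^reg_t 𝟙 - p‖₁ = o(α_t)`. -/
theorem asymptotic_debiasing
    {m n : ℕ} (p : Fin m → ℝ) (q : Fin n → ℝ) (c : Matrix (Fin m) (Fin n) ℝ)
    (hp : p ∈ simplexPos m) (hq : q ∈ simplexPos n)
    (uinf : Fin m → ℝ) (vinf : Fin n → ℝ)
    (hfeas : ∀ i j, uinf i + vinf j ≤ c i j)
    (hopt : ∀ (u : Fin m → ℝ) (v : Fin n → ℝ), (∀ i j, u i + v j ≤ c i j) →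
      ∑ i, p i * u i + ∑ j, q j * v j ≤ ∑ i, p i * uinf i + ∑ j, q j * vinf j)
    (huniq : ∀ (u : Fin m → ℝ) (v : Fin n → ℝ), (∀ i j, u i + v j ≤ c i j) →
      ∑ i, p i * u i + ∑ j, q j * v j = ∑ i, p i * uinf i + ∑ j, q j * vinf j →
      ∃ lam : ℝ, u = (fun i => uinf i + lam) ∧ v = (fun j => vinf j - lam))
    (β : ℕ → ℝ) (hβtop : Tendsto β atTop atTop)
    (α : ℕ → ℝ) (hαdef : ∀ t : ℕ, 1 ≤ t → α t = β t - β (t - 1))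
    (hαpos : ∀ t : ℕ, 1 ≤ t → 0 < α t) (hα0 : Tendsto α atTop (𝓝 0))
    (u : ℕ → Fin m → ℝ)
    (hu : Tendsto (fun t => ⨅ lam : ℝ, ⨆ i, |u t i - uinf i + lam|) atTop (𝓝 0))
    (ptil : ℕ → Fin m → ℝ)
    (hptil : ∀ t i, ptil t i =
      Real.exp (α t * u t i) * p i / (∑ i', Real.exp (α t * u t i') * p i'))
    (πreg : ℕ → Matrix (Fin m) (Fin n) ℝ)
    (hπregmem : ∀ t : ℕ, 1 ≤ t → πreg t ∈ GammaStar q)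
    (hπregopt : ∀ t : ℕ, 1 ≤ t → ∀ π' ∈ GammaStar (m := m) q,
      Freg c (ptil t) (α t) (β t) (πreg t) ≤ Freg c (ptil t) (α t) (β t) π') :
    Tendsto (fun t => l1vec (fun i => rowSum (πreg t) i - p i) / α t) atTop (𝓝 0) := by
  have hp' := hp
  have hq' := hq
  obtain ⟨hp0, hp1⟩ := hp
  obtain ⟨hq0, hq1⟩ := hq
  have hm : 0 < m := by
    rcases Nat.eq_zero_or_pos m with h | h
    · subst h; simp at hp1
    · exact h
  have hn : 0 < n := by
    rcases Nat.eq_zero_or_pos n with h | h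
    · subst h; simp at hq1
    · exact h
  haveI : Nonempty (Fin m) := ⟨⟨0, hm⟩⟩
  rw [Metric.tendsto_atTop']
  intro ε hε
  set ε' := ε / 16 with hε'
  have hε'0 : 0 < ε' := by positivity
  obtain ⟨η, hη, hnear⟩ := near_opt p q c hp' hq' hm uinf vinf hfeas hopt huniq ε' hε'0
  set δ := min ε' (η / 8) with hδ
  have hδ0 : 0 < δ := lt_min hε'0 (by positivity)
  have hinv : Tendsto (fun t => (m : ℝ) * n * (β t)⁻¹) atTop (𝓝 0) := by
    simpa using (tendsto_inv_atTop_zero.comp hβtop).const_mul ((m : ℝ) * n)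
  have hα4 : Tendsto (fun t => α t * (4 * ε')) atTop (𝓝 0) := by
    simpa using hα0.mul_const (4 * ε')
  have hev : ∀ᶠ t in atTop, dist (l1vec (fun i => rowSum (πreg t) i - p i) / α t) 0 < ε := by
    filter_upwards [eventually_ge_atTop 1, hβtop.eventually_gt_atTop 0,
      hinv.eventually_lt_const (show (0:ℝ) < η / 2 by positivity),
      hα4.eventually_lt_const one_pos, hu.eventually_lt_const hδ0] with t ht hβ hmn hα1 hut
    have hα := hαpos t ht
    obtain ⟨lam, hlam⟩ := exists_lt_of_ciInf_lt hut
    have hlam' : ∀ i, |u t i - uinf i + lam| ≤ δ := fun i =>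
      (le_ciSup (f := fun i => |u t i - uinf i + lam|) (Set.finite_range _).bddAbove i).trans
        hlam.le
    obtain ⟨w, v, hwv, hval, hr, hrsum⟩ := step p q c hp' hq' hm hn uinf vinf hfeas
      (α t) (β t) hα hβ (u t) δ lam hlam' (ptil t) (hptil t) (πreg t) (hπregmem t ht)
      (hπregopt t ht)
    have hδη : δ ≤ η / 8 := min_le_right _ _
    have hδε : δ ≤ ε' := min_le_left _ _
    obtain ⟨mu, hmu⟩ := hnear w v hwv (by linarith)
    -- the common shift
    have hdev : ∀ i, |(u t i - w i) + (lam + mu)| ≤ 2 * ε' := by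
      intro i
      have h1 := abs_le.1 (hlam' i)
      have h2 := abs_le.1 (hmu i)
      rw [abs_le]
      constructor <;> linarith [h1.1, h1.2, h2.1, h2.2]
    obtain ⟨i1, -, hi1⟩ : ∃ i ∈ Finset.univ, p i ≤ rowSum (πreg t) i :=
      Finset.exists_le_of_sum_le Finset.univ_nonempty (by rw [hp1, hrsum])
    obtain ⟨i2, -, hi2⟩ : ∃ i ∈ Finset.univ, rowSum (πreg t) i ≤ p i :=
      Finset.exists_le_of_sum_le Finset.univ_nonempty (by rw [hp1, hrsum])
    have hs1 : 0 ≤ u t i1 - w i1 := by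
      rw [hr] at hi1
      have h1 : 1 ≤ Real.exp (α t * (u t i1 - w i1)) := by
        have := hp0 i1
        by_contra hcon
        nlinarith
      have := Real.one_le_exp_iff.1 h1
      exact nonneg_of_mul_nonneg_right this hα
    have hs2 : u t i2 - w i2 ≤ 0 := by
      rw [hr] at hi2
      have h1 : Real.exp (α t * (u t i2 - w i2)) ≤ 1 := by
        have := hp0 i2
        by_contra hcon
        nlinarith
      have := Real.exp_le_one_iff.1 h1
      by_contra hcon
      have := mul_pos hα (not_le.1 hcon)
      linarith
    have hsm : ∀ i, |u t i - w i| ≤ 4 * ε' := by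
      intro i
      have h1 := abs_le.1 (hdev i)
      have h2 := abs_le.1 (hdev i1)
      have h3 := abs_le.1 (hdev i2)
      rw [abs_le]
      constructor <;> linarith [h1.1, h1.2, h2.1, h2.2, h3.1, h3.2]
    have hterm : ∀ i, |rowSum (πreg t) i - p i| ≤ p i * (8 * ε' * α t) := by
      intro i
      have e1 : rowSum (πreg t) i - p i = p i * (Real.exp (α t * (u t i - w i)) - 1) := by
        rw [hr]; ring
      have e2 : |α t * (u t i - w i)| ≤ α t * (4 * ε') := by
        rw [abs_mul, abs_of_pos hα]
        exact mul_le_mul_of_nonneg_left (hsm i) hα.le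
      have e3 := Real.abs_exp_sub_one_le (e2.trans hα1.le)
      rw [e1, abs_mul, abs_of_pos (hp0 i)]
      refine mul_le_mul_of_nonneg_left ?_ (hp0 i).le
      linarith
    have hl1 : l1vec (fun i => rowSum (πreg t) i - p i) ≤ 8 * ε' * α t := by
      calc l1vec (fun i => rowSum (πreg t) i - p i) ≤ ∑ i, p i * (8 * ε' * α t) :=
            Finset.sum_le_sum fun i _ => hterm i
        _ = 8 * ε' * α t := by rw [← Finset.sum_mul, hp1, one_mul]
    have hl0 : 0 ≤ l1vec (fun i => rowSum (πreg t) i - p i) :=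
      Finset.sum_nonneg fun i _ => abs_nonneg _
    rw [Real.dist_eq, sub_zero, abs_of_nonneg (div_nonneg hl0 hα.le), div_lt_iff₀ hα]
    have : 8 * ε' * α t < ε * α t := by
      apply mul_lt_mul_of_pos_right _ hα
      rw [hε']; linarith
    linarith
  obtain ⟨N, hN⟩ := eventually_atTop.1 hev
  exact ⟨N, fun t ht => hN t (le_of_lt ht)⟩


end
end

section
/- Let c ∈ ℝ^{m×n}. For each t, let β_t > 0, a_t ∈ (ℝ_+^*)^m, b_t ∈ (ℝ_+^*)^n, set π_t = diag(a_t) e^{−β_t c} diag(b_t) with marginals p_t = π_t𝟙 and q_t = π_tᵀ𝟙 of total mass 1. Assume β_t → ∞, p_t → p ∈ Δ*_m and q_t → q ∈ Δ*_n. Then EOT_{β_t}(p_t, q_t) → OT(p,q), and, up to extracting a subsequence, (π_t) converges to an optimal transport plan for OT(p,q). -/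
open Finset Filter Topology ENNReal

noncomputable section

lemma aux_term (x w r L e : ℝ) (hx : 0 ≤ x) (hw : 0 < w) (hr : 0 < r)
    (he : e = L - Real.log w) :
    (e * w + (w * Real.log (w / r) - w + r)) + (L - Real.log r) * (x - w)
      ≤ e * x + (x * Real.log (x / r) - x + r) := by
  subst he
  rw [Real.log_div hw.ne' hr.ne']
  rcases hx.eq_or_lt with rfl | hx
  · simp; nlinarith
  · rw [Real.log_div hx.ne' hr.ne']
    have h := Real.log_le_sub_one_of_pos (div_pos hw hx)
    rw [Real.log_div hw.ne' hx.ne'] at h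
    have h2 : x * (Real.log w - Real.log x) ≤ w - x := by
      calc x * (Real.log w - Real.log x) ≤ x * (w / x - 1) :=
            mul_le_mul_of_nonneg_left h hx.le
        _ = w - x := by field_simp
    nlinarith

lemma aux_opt {m n : ℕ} (hm : 0 < m) (hn : 0 < n) (c : Matrix (Fin m) (Fin n) ℝ) (β : ℝ)
    (hβ : 0 < β)
    (a : Fin m → ℝ) (b : Fin n → ℝ) (ha : ∀ i, 0 < a i) (hb : ∀ j, 0 < b j)
    (w : Matrix (Fin m) (Fin n) ℝ)
    (hw : w = fun i j => a i * Real.exp (-(β * c i j)) * b j)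
    (x : Matrix (Fin m) (Fin n) ℝ) (hx : x ∈ Gamma (rowSum w) (colSum w)) :
    eotObj c β w ≤ eotObj c β x := by
  obtain ⟨hx0, hxr, hxc⟩ := hx
  have hr : 0 < (1 / (m * n) : ℝ) := by positivity
  set r : ℝ := 1 / (m * n) with hrdef
  have key : ∀ i j, (β * c i j * w i j + (w i j * Real.log (w i j / r) - w i j + r))
      + ((Real.log (a i) + Real.log (b j)) - Real.log r) * (x i j - w i j)
      ≤ β * c i j * x i j + (x i j * Real.log (x i j / r) - x i j + r) := by
    intro i j
    have hwij : w i j = a i * Real.exp (-(β * c i j)) * b j := by rw [hw]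
    have hwp : 0 < w i j := by
      rw [hwij]; exact mul_pos (mul_pos (ha i) (Real.exp_pos _)) (hb j)
    apply aux_term _ _ _ _ _ (hx0 i j) hwp hr
    rw [hwij, Real.log_mul (mul_pos (ha i) (Real.exp_pos _)).ne' (hb j).ne',
      Real.log_mul (ha i).ne' (Real.exp_pos _).ne', Real.log_exp]
    ring
  have hrow : ∀ i, ∑ j, (x i j - w i j) = 0 := by
    intro i
    rw [Finset.sum_sub_distrib]
    have := congrFun hxr i
    simp only [rowSum] at this
    linarith
  have hcol : ∀ j, ∑ i, (x i j - w i j) = 0 := by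
    intro j
    rw [Finset.sum_sub_distrib]
    have := congrFun hxc j
    simp only [colSum] at this
    linarith
  have hz : ∑ i, ∑ j, ((Real.log (a i) + Real.log (b j)) - Real.log r) * (x i j - w i j) = 0 := by
    have e : ∀ i j, ((Real.log (a i) + Real.log (b j)) - Real.log r) * (x i j - w i j)
        = (Real.log (a i) - Real.log r) * (x i j - w i j) + Real.log (b j) * (x i j - w i j) := by
      intro i j; ring
    simp only [e, Finset.sum_add_distrib]
    rw [Finset.sum_comm (f := fun i j => Real.log (b j) * (x i j - w i j))]
    simp only [← Finset.mul_sum, hrow, hcol]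
    simp
  have hs := Finset.sum_le_sum (fun i (_ : i ∈ Finset.univ) =>
    Finset.sum_le_sum (fun j (_ : j ∈ Finset.univ) => key i j))
  have ex : ∀ y : Matrix (Fin m) (Fin n) ℝ,
      ∑ i, ∑ j, (β * c i j * y i j + (y i j * Real.log (y i j / r) - y i j + r))
        = β * eotObj c β y := by
    intro y
    simp only [eotObj, frob, KLmat, piRef, mul_add, ← mul_assoc, mul_inv_cancel₀ hβ.ne', one_mul,
      Finset.mul_sum, ← Finset.sum_add_distrib]
    rfl
  rw [ex x] at hs
  simp only [Finset.sum_add_distrib (f := fun j => β * c _ j * w _ j +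
    (w _ j * Real.log (w _ j / r) - w _ j + r))] at hs
  rw [Finset.sum_add_distrib, hz, ex w, add_zero] at hs
  exact le_of_mul_le_mul_left hs hβ

lemma aux_KL {m n : ℕ} (hm : 0 < m) (hn : 0 < n) :
    ∃ C : ℝ, ∀ x : Matrix (Fin m) (Fin n) ℝ, (∀ i j, 0 ≤ x i j) → (∀ i j, x i j ≤ 1) →
      |KLmat x (piRef m n)| ≤ C := by
  have hr : 0 < (1 / (m * n) : ℝ) := by positivity
  set r : ℝ := 1 / (m * n) with hrdef
  have hcont : Continuous (fun x : ℝ => r * ((x / r) * Real.log (x / r)) - x + r) := by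
    have := Real.continuous_mul_log.comp (continuous_id.div_const r)
    exact ((continuous_const.mul this).sub continuous_id).add continuous_const
  obtain ⟨C, hC⟩ := (isCompact_Icc (a := (0:ℝ)) (b := 1)).exists_bound_of_continuousOn
    hcont.continuousOn
  refine ⟨∑ _i : Fin m, ∑ _j : Fin n, C, fun x h0 h1 => ?_⟩
  unfold KLmat
  refine (Finset.abs_sum_le_sum_abs _ _).trans (Finset.sum_le_sum fun i _ => ?_)
  refine (Finset.abs_sum_le_sum_abs _ _).trans (Finset.sum_le_sum fun j _ => ?_)
  have := hC (x i j) ⟨h0 i j, h1 i j⟩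
  rw [Real.norm_eq_abs] at this
  have e : r * ((x i j / r) * Real.log (x i j / r)) = x i j * Real.log (x i j / r) := by
    field_simp
  rw [e] at this
  exact this

lemma aux_le_one {m n : ℕ} (p : Fin m → ℝ) (q : Fin n → ℝ) (hp : ∑ i, p i = 1)
    (x : Matrix (Fin m) (Fin n) ℝ) (hx : x ∈ Gamma p q) (i : Fin m) (j : Fin n) : x i j ≤ 1 := by
  obtain ⟨h0, hr, -⟩ := hx
  have hp0 : ∀ i, 0 ≤ p i := fun i => by
    rw [← hr]; exact Finset.sum_nonneg fun j _ => h0 i j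
  calc x i j ≤ ∑ j, x i j := Finset.single_le_sum (f := fun j => x i j)
        (fun j _ => h0 i j) (Finset.mem_univ j)
    _ = p i := by rw [← hr]; rfl
    _ ≤ ∑ i, p i := Finset.single_le_sum (fun i _ => hp0 i) (Finset.mem_univ i)
    _ = 1 := hp

/-- Approximation of a plan in `Γ(p,q)` by plans with nearby marginals. -/
lemma aux_approx {m n : ℕ} (p : Fin m → ℝ) (q : Fin n → ℝ) (hp : p ∈ simplexPos m)
    (hq : q ∈ simplexPos n) (P : ℕ → Fin m → ℝ) (Q : ℕ → Fin n → ℝ)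
    (hP1 : ∀ t, ∑ i, P t i = 1) (hQ1 : ∀ t, ∑ j, Q t j = 1)
    (hP : Tendsto P atTop (𝓝 p)) (hQ : Tendsto Q atTop (𝓝 q))
    (x : Matrix (Fin m) (Fin n) ℝ) (hx : x ∈ Gamma p q) :
    ∃ y : ℕ → Matrix (Fin m) (Fin n) ℝ, (∀ᶠ t in atTop, y t ∈ Gamma (P t) (Q t)) ∧
      Tendsto y atTop (𝓝 x) := by
  obtain ⟨hx0, hxr, hxc⟩ := hx
  obtain ⟨hp0, hp1⟩ := hp
  obtain ⟨hq0, hq1⟩ := hq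
  let ε : ℕ → ℝ := fun t => (∑ i, |P t i - p i| / p i) + (∑ j, |Q t j - q j| / q j)
    + 1 / ((t : ℝ) + 1)
  have hA0 : ∀ t i, 0 ≤ |P t i - p i| / p i := fun t i => div_nonneg (abs_nonneg _) (hp0 i).le
  have hB0 : ∀ t j, 0 ≤ |Q t j - q j| / q j := fun t j => div_nonneg (abs_nonneg _) (hq0 j).le
  have hN : ∀ t : ℕ, 0 < 1 / ((t : ℝ) + 1) := fun t => by positivity
  have hεpos : ∀ t, 0 < ε t := fun t => by
    have := Finset.sum_nonneg (fun i (_ : i ∈ Finset.univ) => hA0 t i)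
    have := Finset.sum_nonneg (fun i (_ : i ∈ Finset.univ) => hB0 t i)
    have := hN t
    simp only [ε]; linarith
  have hεlim : Tendsto ε atTop (𝓝 0) := by
    have h1 : Tendsto (fun t => ∑ i, |P t i - p i| / p i) atTop (𝓝 (∑ i : Fin m, 0)) := by
      refine tendsto_finsetSum _ fun i _ => ?_
      have := (((tendsto_pi_nhds.1 hP i).sub_const (p i)).abs).div_const (p i)
      simpa using this
    have h2 : Tendsto (fun t => ∑ i, |Q t i - q i| / q i) atTop (𝓝 (∑ i : Fin n, 0)) := by
      refine tendsto_finsetSum _ fun i _ => ?_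
      have := (((tendsto_pi_nhds.1 hQ i).sub_const (q i)).abs).div_const (q i)
      simpa using this
    have := (h1.add h2).add (tendsto_one_div_add_atTop_nhds_zero_nat (𝕜 := ℝ))
    simpa [ε] using this
  have hPε : ∀ t i, 0 ≤ P t i - (1 - ε t) * p i := by
    intro t i
    have h1 : |P t i - p i| / p i ≤ ε t := by
      have := Finset.single_le_sum (fun i _ => hA0 t i) (Finset.mem_univ i)
      have := Finset.sum_nonneg (fun i (_ : i ∈ Finset.univ) => hB0 t i)
      have := hN t
      simp only [ε]; linarith
    rw [div_le_iff₀ (hp0 i)] at h1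
    have := neg_abs_le (P t i - p i)
    linarith
  have hQε : ∀ t j, 0 ≤ Q t j - (1 - ε t) * q j := by
    intro t i
    have h1 : |Q t i - q i| / q i ≤ ε t := by
      have := Finset.single_le_sum (fun i _ => hB0 t i) (Finset.mem_univ i)
      have := Finset.sum_nonneg (fun i (_ : i ∈ Finset.univ) => hA0 t i)
      have := hN t
      simp only [ε]; linarith
    rw [div_le_iff₀ (hq0 i)] at h1
    have := neg_abs_le (Q t i - q i)
    linarith
  have sP : ∀ t, ∑ i, (P t i - (1 - ε t) * p i) = ε t := fun t => by
    rw [Finset.sum_sub_distrib, ← Finset.mul_sum, hP1, hp1]; ring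
  have sQ : ∀ t, ∑ i, (Q t i - (1 - ε t) * q i) = ε t := fun t => by
    rw [Finset.sum_sub_distrib, ← Finset.mul_sum, hQ1, hq1]; ring
  have hPle : ∀ t i, P t i - (1 - ε t) * p i ≤ ε t := fun t i => by
    conv_rhs => rw [← sP t]
    exact Finset.single_le_sum (f := fun i => P t i - (1 - ε t) * p i)
      (fun i _ => hPε t i) (Finset.mem_univ i)
  have hQle : ∀ t i, Q t i - (1 - ε t) * q i ≤ ε t := fun t i => by
    conv_rhs => rw [← sQ t]
    exact Finset.single_le_sum (f := fun i => Q t i - (1 - ε t) * q i)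
      (fun i _ => hQε t i) (Finset.mem_univ i)
  refine ⟨fun t i j => (1 - ε t) * x i j
    + (P t i - (1 - ε t) * p i) * (Q t j - (1 - ε t) * q j) / ε t, ?_, ?_⟩
  · filter_upwards [hεlim.eventually_lt_const zero_lt_one] with t ht
    refine ⟨fun i j => ?_, ?_, ?_⟩
    · exact add_nonneg (mul_nonneg (by linarith) (hx0 i j))
        (div_nonneg (mul_nonneg (hPε t i) (hQε t j)) (hεpos t).le)
    · funext i
      have h := congrFun hxr i
      simp only [rowSum] at h ⊢
      rw [Finset.sum_add_distrib, ← Finset.mul_sum, h, ← Finset.sum_div, ← Finset.mul_sum, sQ,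
        mul_div_cancel_right₀ _ (hεpos t).ne']
      ring
    · funext j
      have h := congrFun hxc j
      simp only [colSum] at h ⊢
      rw [Finset.sum_add_distrib, ← Finset.mul_sum, h, ← Finset.sum_div, ← Finset.sum_mul, sP,
        mul_div_cancel_left₀ _ (hεpos t).ne']
      ring
  · refine tendsto_pi_nhds.2 fun i => tendsto_pi_nhds.2 fun j => ?_
    have h1 : Tendsto (fun t => (1 - ε t) * x i j) atTop (𝓝 ((1 - 0) * x i j)) :=
      (hεlim.const_sub 1).mul_const _
    have h2 : Tendsto (fun t => (P t i - (1 - ε t) * p i) * (Q t j - (1 - ε t) * q j) / ε t)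
        atTop (𝓝 0) := by
      refine squeeze_zero (fun t => div_nonneg (mul_nonneg (hPε t i) (hQε t j)) (hεpos t).le)
        (fun t => ?_) hεlim
      rw [div_le_iff₀ (hεpos t)]
      exact mul_le_mul (hPle t i) (hQle t j) (hQε t j) (hεpos t).le
    simpa using h1.add h2

lemma frob_cont {m n : ℕ} (c : Matrix (Fin m) (Fin n) ℝ) : Continuous (frob c) := by
  unfold frob
  fun_prop

lemma rowSum_cont {m n : ℕ} : Continuous (rowSum (m := m) (n := n)) := by
  unfold rowSum
  fun_prop

lemma colSum_cont {m n : ℕ} : Continuous (colSum (m := m) (n := n)) := by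
  unfold colSum
  fun_prop

/-- Lemma 6, second part: stability of EOT.
If `π_t = diag(a_t) e^{-β_t c} diag(b_t)` have mass 1, `β_t → ∞`, and the marginals
`p_t = π_t𝟙 → p`, `q_t = π_tᵀ𝟙 → q`, then `EOT_{β_t}(p_t,q_t) → OT(p,q)` and, up to a
subsequence, `π_t` converges to an optimal transport plan. -/
theorem eot_stability
    {m n : ℕ} (c : Matrix (Fin m) (Fin n) ℝ)
    (β : ℕ → ℝ) (hβpos : ∀ t, 0 < β t) (hβtop : Tendsto β atTop atTop)
    (a : ℕ → Fin m → ℝ) (b : ℕ → Fin n → ℝ)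
    (ha : ∀ t i, 0 < a t i) (hb : ∀ t j, 0 < b t j)
    (π : ℕ → Matrix (Fin m) (Fin n) ℝ)
    (hπ : ∀ t, π t = fun i j => a t i * Real.exp (-(β t * c i j)) * b t j)
    (hmass : ∀ t, ∑ i, ∑ j, π t i j = 1)
    (p : Fin m → ℝ) (q : Fin n → ℝ) (hp : p ∈ simplexPos m) (hq : q ∈ simplexPos n)
    (hpt : Tendsto (fun t => rowSum (π t)) atTop (𝓝 p))
    (hqt : Tendsto (fun t => colSum (π t)) atTop (𝓝 q)) :
    Tendsto (fun t => eotVal c (β t) (rowSum (π t)) (colSum (π t))) atTop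
        (𝓝 (OTval c p q)) ∧
      ∃ φ : ℕ → ℕ, StrictMono φ ∧ ∃ πinf ∈ Gamma p q,
        (∀ π' ∈ Gamma p q, frob c πinf ≤ frob c π') ∧
          Tendsto (fun k => π (φ k)) atTop (𝓝 πinf) := by
  have hm : 0 < m := by
    rcases Nat.eq_zero_or_pos m with rfl | h
    · have := hp.2; simp at this
    · exact h
  have hn : 0 < n := by
    rcases Nat.eq_zero_or_pos n with rfl | h
    · have := hq.2; simp at this
    · exact h
  obtain ⟨C, hC⟩ := aux_KL hm hn
  have hP1 : ∀ t, ∑ i, rowSum (π t) i = 1 := hmass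
  have hQ1 : ∀ t, ∑ j, colSum (π t) j = 1 := fun t => by
    exact Finset.sum_comm.trans (hmass t)
  have hself : ∀ t, π t ∈ Gamma (rowSum (π t)) (colSum (π t)) := fun t => by
    refine ⟨fun i j => ?_, rfl, rfl⟩
    rw [hπ t]
    exact (mul_pos (mul_pos (ha t i) (Real.exp_pos _)) (hb t j)).le
  have hopt : ∀ t, ∀ x ∈ Gamma (rowSum (π t)) (colSum (π t)),
      eotObj c (β t) (π t) ≤ eotObj c (β t) x := fun t x hx =>
    aux_opt hm hn c (β t) (hβpos t) (a t) (b t) (ha t) (hb t) (π t) (hπ t) x hx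
  have hval : ∀ t, eotVal c (β t) (rowSum (π t)) (colSum (π t)) = eotObj c (β t) (π t) := by
    intro t
    have : Nonempty (Gamma (rowSum (π t)) (colSum (π t))) := ⟨⟨π t, hself t⟩⟩
    apply le_antisymm
    · exact ciInf_le (f := fun x : Gamma (rowSum (π t)) (colSum (π t)) => eotObj c (β t) x.1)
        ⟨eotObj c (β t) (π t), by rintro _ ⟨x, rfl⟩; exact hopt t x.1 x.2⟩ ⟨π t, hself t⟩
    · exact le_ciInf fun x => hopt t x.1 x.2
  have hdiff : ∀ t, ∀ x ∈ Gamma (rowSum (π t)) (colSum (π t)),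
      |(β t)⁻¹ * KLmat x (piRef m n)| ≤ (β t)⁻¹ * C := by
    intro t x hx
    rw [abs_mul, abs_of_pos (inv_pos.2 (hβpos t))]
    exact mul_le_mul_of_nonneg_left (hC x hx.1 (aux_le_one _ _ (hP1 t) x hx))
      (inv_pos.2 (hβpos t)).le
  have hβC : Tendsto (fun t => (β t)⁻¹ * C) atTop (𝓝 0) := by
    simpa using (tendsto_inv_atTop_zero.comp hβtop).mul_const C
  have hfr : ∀ t, ∀ x ∈ Gamma (rowSum (π t)) (colSum (π t)),
      frob c (π t) ≤ frob c x + ((β t)⁻¹ * C + (β t)⁻¹ * C) := by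
    intro t x hx
    have h1 := abs_le.1 (hdiff t x hx)
    have h2 := abs_le.1 (hdiff t (π t) (hself t))
    have h3 := hopt t x hx
    simp only [eotObj] at h3
    linarith [h1.1, h1.2, h2.1, h2.2]
  have main : ∀ ns : ℕ → ℕ, Tendsto ns atTop atTop →
      ∃ φ : ℕ → ℕ, StrictMono φ ∧ ∃ πinf ∈ Gamma p q,
        (∀ π' ∈ Gamma p q, frob c πinf ≤ frob c π') ∧
          Tendsto (fun k => π (ns (φ k))) atTop (𝓝 πinf) := by
    intro ns hns
    have hcpt : IsCompact (Set.Icc (fun _ _ => 0 : Fin m → Fin n → ℝ) (fun _ _ => 1)) :=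
      isCompact_Icc
    obtain ⟨y, -, φ, hφ, hlim⟩ := IsCompact.tendsto_subseq (X := Fin m → Fin n → ℝ)
      hcpt (x := fun k => π (ns k))
      (fun k => ⟨fun i j => (hself (ns k)).1 i j,
        fun i j => aux_le_one _ _ (hP1 (ns k)) _ (hself (ns k)) i j⟩)
    have hlim' : Tendsto (fun k => π (ns (φ k))) atTop
        (𝓝 (y : Matrix (Fin m) (Fin n) ℝ)) := hlim
    have hsub : Tendsto (fun k => ns (φ k)) atTop atTop := hns.comp hφ.tendsto_atTop
    refine ⟨φ, hφ, y, ⟨fun i j => ?_, ?_, ?_⟩, fun x hx => ?_, hlim'⟩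
    · exact ge_of_tendsto' (tendsto_pi_nhds.1 (tendsto_pi_nhds.1 hlim' i) j)
        (fun k => (hself _).1 i j)
    · exact tendsto_nhds_unique ((rowSum_cont.tendsto _).comp hlim') (hpt.comp hsub)
    · exact tendsto_nhds_unique ((colSum_cont.tendsto _).comp hlim') (hqt.comp hsub)
    · obtain ⟨z, hz, hzl⟩ := aux_approx p q hp hq _ _ hP1 hQ1 hpt hqt x hx
      have hR : Tendsto (fun t => frob c (z t) + ((β t)⁻¹ * C + (β t)⁻¹ * C)) atTop
          (𝓝 (frob c x)) := by
        simpa using (((frob_cont c).tendsto _).comp hzl).add (hβC.add hβC)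
      refine le_of_tendsto_of_tendsto (((frob_cont c).tendsto _).comp hlim') (hR.comp hsub) ?_
      filter_upwards [hsub.eventually hz] with k hk
      exact hfr _ _ hk
  refine ⟨?_, main id tendsto_id⟩
  refine tendsto_of_subseq_tendsto fun ns hns => ?_
  obtain ⟨φ, hφ, y, hy, hyo, hl⟩ := main ns hns
  refine ⟨φ, ?_⟩
  have hOT : OTval c p q = frob c y := by
    have : Nonempty (Gamma p q) := ⟨⟨y, hy⟩⟩
    apply le_antisymm
    · exact ciInf_le (f := fun x : Gamma p q => frob c x.1)
        ⟨frob c y, by rintro _ ⟨x, rfl⟩; exact hyo x.1 x.2⟩ ⟨y, hy⟩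
    · exact le_ciInf fun x => hyo x.1 x.2
  have hk : Tendsto (fun t => (β t)⁻¹ * KLmat (π t) (piRef m n)) atTop (𝓝 0) :=
    squeeze_zero_norm (fun t => hdiff t _ (hself t)) hβC
  have hsub : Tendsto (fun k => ns (φ k)) atTop atTop := hns.comp hφ.tendsto_atTop
  have h := (((frob_cont c).tendsto _).comp hl).add (hk.comp hsub)
  rw [hOT]
  simp only [hval]
  simpa [eotObj] using h

end
end

section
/- Let p ∈ Δ*_m. Then the function G on nonnegative m×n matrices defined by G(π) = KL(π𝟙 | p) is 1-relatively smooth with respect to the negative entropy h_e(π) = Σ_{ij} π_{ij} log(π_{ij}) over the simplex Δ_{m×n}; that is, the function π ↦ h_e(π) − G(π) is convex on Δ_{m×n}. -/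
open Finset Filter Topology ENNReal

noncomputable section

lemma key_aux {x s X S : ℝ} (hx : 0 ≤ x) (hxs : x ≤ s) (hX : 0 < X) (hS : 0 < S) :
    x * (Real.log X - Real.log S) + x - s * (X / S) ≤ x * Real.log x - x * Real.log s := by
  rcases hx.eq_or_lt with h | h
  · subst h
    have : 0 ≤ s * (X / S) := by positivity
    simpa using this
  · have hs : 0 < s := lt_of_lt_of_le h hxs
    have h1 := Real.log_le_sub_one_of_pos (show 0 < (s * X) / (S * x) by positivity)
    rw [Real.log_div (by positivity) (by positivity), Real.log_mul hs.ne' hX.ne',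
      Real.log_mul hS.ne' h.ne'] at h1
    have h2 := mul_le_mul_of_nonneg_left h1 hx
    have h3 : x * ((s * X) / (S * x) - 1) = s * (X / S) - x := by field_simp
    rw [h3] at h2
    linarith

lemma two_aux {x s y t a b : ℝ} (hx : 0 ≤ x) (hxs : x ≤ s) (hy : 0 ≤ y) (hyt : y ≤ t)
    (ha : 0 ≤ a) (hb : 0 ≤ b) :
    (a * x + b * y) * Real.log (a * x + b * y) - (a * x + b * y) * Real.log (a * s + b * t)
      ≤ a * (x * Real.log x - x * Real.log s) + b * (y * Real.log y - y * Real.log t) := by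
  have hax : 0 ≤ a * x := by positivity
  have hby : 0 ≤ b * y := by positivity
  rcases (add_nonneg hax hby).eq_or_lt with h | h
  · have h1 : a * x = 0 := by linarith
    have h2 : b * y = 0 := by linarith
    have h3 : a * (x * Real.log x - x * Real.log s) = (a * x) * (Real.log x - Real.log s) := by ring
    have h4 : b * (y * Real.log y - y * Real.log t) = (b * y) * (Real.log y - Real.log t) := by ring
    rw [h3, h4, h1, h2]
    simp
  · have hS : 0 < a * s + b * t := lt_of_lt_of_le h
      (add_le_add (mul_le_mul_of_nonneg_left hxs ha) (mul_le_mul_of_nonneg_left hyt hb))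
    have k1 := mul_le_mul_of_nonneg_left (key_aux hx hxs h hS) ha
    have k2 := mul_le_mul_of_nonneg_left (key_aux hy hyt h hS) hb
    have k3 : (a * s + b * t) * ((a * x + b * y) / (a * s + b * t)) = a * x + b * y := by
      field_simp
    nlinarith [k1, k2, k3]

lemma obj_aux {m n : ℕ} (p : Fin m → ℝ) (hp : ∀ i, 0 < p i) (π : Matrix (Fin m) (Fin n) ℝ) :
    (∑ i, ∑ j, π i j * Real.log (π i j)) - KLvec (rowSum π) p =
      ∑ i, ((∑ j, (π i j * Real.log (π i j) - π i j * Real.log (rowSum π i)))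
        + (rowSum π i * (Real.log (p i) + 1) - p i)) := by
  unfold KLvec
  rw [← Finset.sum_sub_distrib]
  refine Finset.sum_congr rfl fun i _ => ?_
  rw [Finset.sum_sub_distrib, ← Finset.sum_mul]
  change _ = _ - rowSum π i * Real.log (rowSum π i) + _
  rcases eq_or_ne (rowSum π i) 0 with h | h
  · rw [h]; simp; ring
  · rw [Real.log_div h (hp i).ne']; ring

/-- Lemma 7: relative smoothness of the marginal KL penalty.
For `p ∈ Δ*_m`, the function `G(π) = KL(π𝟙|p)` is 1-relatively smooth with respect to the
negative entropy `h_e(π) = ∑ π_ij log π_ij` over `Δ_{m×n}`, i.e. `h_e - G` is convex there. -/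
theorem marginal_KL_relatively_smooth
    {m n : ℕ} (p : Fin m → ℝ) (hp : p ∈ simplexPos m) :
    ConvexOn ℝ
      {π : Matrix (Fin m) (Fin n) ℝ | (∀ i j, 0 ≤ π i j) ∧ ∑ i, ∑ j, π i j = 1}
      (fun π => (∑ i, ∑ j, π i j * Real.log (π i j)) - KLvec (rowSum π) p) := by
  constructor
  · rintro x ⟨hx, hx1⟩ y ⟨hy, hy1⟩ a b ha hb hab
    refine ⟨fun i j => ?_, ?_⟩
    · have := hx i j
      have := hy i j
      simp only [Matrix.add_apply, Matrix.smul_apply, smul_eq_mul]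
      positivity
    · simp only [Matrix.add_apply, Matrix.smul_apply, smul_eq_mul, Finset.sum_add_distrib,
        ← Finset.mul_sum, hx1, hy1]
      linarith
  · rintro x ⟨hx, hx1⟩ y ⟨hy, hy1⟩ a b ha hb hab
    simp only [obj_aux p hp.1, smul_eq_mul]
    rw [Finset.mul_sum, Finset.mul_sum, ← Finset.sum_add_distrib]
    refine Finset.sum_le_sum fun i _ => ?_
    have hr : rowSum (a • x + b • y) i = a * rowSum x i + b * rowSum y i := by
      simp [rowSum, Finset.sum_add_distrib, Finset.mul_sum]
    rw [hr]
    have hj : ∑ j, ((a • x + b • y) i j * Real.log ((a • x + b • y) i j)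
          - (a • x + b • y) i j * Real.log (a * rowSum x i + b * rowSum y i))
        ≤ a * (∑ j, (x i j * Real.log (x i j) - x i j * Real.log (rowSum x i)))
          + b * (∑ j, (y i j * Real.log (y i j) - y i j * Real.log (rowSum y i))) := by
      rw [Finset.mul_sum, Finset.mul_sum, ← Finset.sum_add_distrib]
      refine Finset.sum_le_sum fun j _ => ?_
      simp only [Matrix.add_apply, Matrix.smul_apply, smul_eq_mul]
      exact two_aux (hx i j)
        (Finset.single_le_sum (f := fun j => x i j) (fun k _ => hx i k) (Finset.mem_univ j))
        (hy i j)
        (Finset.single_le_sum (f := fun j => y i j) (fun k _ => hy i k) (Finset.mem_univ j))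
        ha hb
    have hpp : p i = a * p i + b * p i := by rw [← add_mul, hab, one_mul]
    linarith [hj, hpp]

end
end
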